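/- Assume d ≥ 3. For every p ≥ 1 and every integer l ≥ 0: N( (B_2^n)^{d−1}, ρ̂_A, 2^{−l} Σ_{k=0}^{d−1} p^{(k+1−d)/2} s_k(A) ) ≤ exp( C(d) 2^{2l} p ), where ρ̂_A is the pseudometric on (ℝ^n)^{d−1} induced by the norm ĥα_A and C(d) depends only on d. -/

import Mathlib

/-!
Write `ε = p^(-1/2) ≤ 1` and `S = ∑_k ε^(d-k) s_k(A)`. Every summand of `hatAlpha` belongs to a
coordinate `j0` and a pair `(P, P')`, and is a supremum over unit arrays `x` of `Φ (weight j0 P y x)`,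
where `weight j0 P y x` is the array `y_{i_{j0}} ∏_{I ∈ P} x_{i_I}` and `Φ` (`avgSeminorm`) is the
seminorm `W ↦ E sup_t ∑_i W_i (∏_{J ∈ P'} g_{i_J}) ∑_j A_{ij} t_j`. There are boundedly many such
summands (in terms of `d`), so it suffices to cut the Euclidean ball of `y`'s into
`2 exp(t^2/2)` pieces, `t` of order `2^l √p`, on which each summand oscillates by a small multiple
of `2^(-l) S`, and to take the common refinement.

For one summand this is the dual Sudakov inequality (`dual_sudakov`), once a symmetric set `G` of
Gaussian measure at least `1/2` is found with `Φ (weight j0 P g x) ≤ C S / ε` for all `g ∈ G` and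
all unit `x` at once (`exists_core_set`). The uniformity in `x`, which is the crux, comes
from smoothing. For every `u`, Maurey's property (τ) (`tau_stdGaussian`) bounds the exponential
moment of the infimal convolution of `Φ (weight j0 P · u)` with the quadratic cost, centred at its
mean. Averaging over `u = ε h` with `h` Gaussian and using Fubini and Markov's inequality gives `G`,
not depending on `x`, on which the `h`-average is at most `2`. For a given `x`, the Cameron–Martin
shift `h ↦ h + x / ε` and Jensen's inequality (`core_bound`) turn this into a bound for
`f (weight j0 P g x)`, `f` a functional supporting `Φ`: the shift costs `|P| / (2 ε^2)`, and the two
remaining terms are the second moment of the coefficients of `f` and the mean of `Φ` at the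
randomised array `x + ε h`.

Expanding the product over `P`, the second moment is a sum over `Q ⊆ P` of
squares of `‖A‖_{P' | (P ∖ Q) ∪ {{j0} ∪ ⋃ Q}}` (`second_moment_bound`), and the mean is a sum of
`‖A‖_{P' ∪ Q ∪ {{j0}} | P ∖ Q}` (`mean_bound`); with the powers of `ε` that occur, all of these
are bounded by `S` (`hypTensor_avg`, `hypGauss_avg`).
-/

open MeasureTheory ProbabilityTheory
open scoped Classical

noncomputable section

/-- product of i.i.d. standard Gaussians indexed by `ι`. -/
def stdGaussian (ι : Type*) [Fintype ι] : Measure (ι → ℝ) :=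
  Measure.pi fun _ => gaussianReal 0 1

/-- Index type for block Gaussians. -/
abbrev GIdx (d n : ℕ) := Σ J : Finset (Fin d), ({l // l ∈ J} → Fin n)

def IsPartition {d : ℕ} (J : Finset (Fin d)) (P : Finset (Finset (Fin d))) : Prop :=
  (∀ I ∈ P, I.Nonempty) ∧ (∀ I ∈ P, ∀ I' ∈ P, I ≠ I' → Disjoint I I') ∧ P.sup id = J

def IsPartitionPair {d : ℕ} (S : Finset (Fin d)) (P P' : Finset (Finset (Fin d))) : Prop :=
  Disjoint P P' ∧ IsPartition S (P ∪ P')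

/-- nonzero coordinates of `Fin (d+1)`: the coordinates `2,…,d` of the paper. -/
abbrev PIdx (d : ℕ) : Type := {k : Fin (d + 1) // k ≠ 0}

/-- a point of `(ℝ^n)^{d-1} × ℝ^m`. -/
abbrev Pt (n m d : ℕ) : Type := (PIdx d → Fin n → ℝ) × (Fin m → ℝ)

/-- assembling a full multi-index out of its first coordinate and the rest. -/
def ext0 {n d : ℕ} (i1 : Fin n) (i' : PIdx d → Fin n) : Fin (d + 1) → Fin n :=
  fun k => if h : k = 0 then i1 else i' ⟨k, h⟩

/-- `‖A‖_{P'∣P}` for an array with values indexed by `Fin m`, relative to `T ⊆ ℝ^m`. -/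
def chaosNormT {n m d : ℕ} (A : (Fin (d + 1) → Fin n) → Fin m → ℝ)
    (T : Set (Fin m → ℝ)) (P' P : Finset (Finset (Fin (d + 1)))) : ℝ :=
  sSup { r : ℝ | ∃ x : (I : Finset (Fin (d + 1))) → ({l // l ∈ I} → Fin n) → ℝ,
    (∀ I ∈ P, ∑ v : {l // l ∈ I} → Fin n, x I v ^ 2 ≤ 1) ∧
    r = ∫ ω : GIdx (d + 1) n → ℝ,
        sSup { s : ℝ | ∃ t ∈ T, s = ∑ i : Fin (d + 1) → Fin n, ∑ j : Fin m,
          (∏ I ∈ P, x I fun l => i l.1) * (∏ J ∈ P', ω ⟨J, fun l => i l.1⟩) *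
            A i j * t j }
        ∂ stdGaussian (GIdx (d + 1) n) }

/-- `s_k(A)`. -/
def sNorm {n m d : ℕ} (A : (Fin (d + 1) → Fin n) → Fin m → ℝ)
    (T : Set (Fin m → ℝ)) (k : ℕ) : ℝ :=
  ∑ PP ∈ Finset.univ.filter (fun PP :
      Finset (Finset (Fin (d + 1))) × Finset (Finset (Fin (d + 1))) =>
      IsPartitionPair Finset.univ PP.1 PP.2 ∧ PP.1.card = k),
    chaosNormT A T PP.2 PP.1

/-- the pseudometric `ρ_A`. -/
def rhoA {n m d : ℕ} (A : (Fin (d + 1) → Fin n) → Fin m → ℝ) (z w : Pt n m d) : ℝ :=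
  Real.sqrt (∑ i1 : Fin n,
    (∑ i' : PIdx d → Fin n, ∑ j : Fin m, A (ext0 i1 i') j *
      ((∏ k, w.1 k (i' k)) * w.2 j - (∏ k, z.1 k (i' k)) * z.2 j)) ^ 2)

/-- `N(S, ρ, ε)`: the minimal number of closed balls of diameter `ε` (radius `ε/2`)
covering `S`. -/
def covNum {β : Type*} (S : Set β) (ρ : β → β → ℝ) (ε : ℝ) : ℝ :=
  sInf { N : ℝ | ∃ c : Finset β, (c.card : ℝ) = N ∧
    S ⊆ ⋃ x ∈ c, { y | ρ x y ≤ ε / 2 } }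

/-- `F_A(U)`. -/
def FA {n m d : ℕ} (A : (Fin (d + 1) → Fin n) → Fin m → ℝ) (U : Set (Pt n m d)) : ℝ :=
  ∫ ω : Fin n → ℝ, sSup { s : ℝ | ∃ z ∈ U,
      s = ∑ i : Fin (d + 1) → Fin n, ∑ j : Fin m,
        ω (i 0) * (∏ k : PIdx d, z.1 k (i k.1)) * A i j * z.2 j }
    ∂ stdGaussian (Fin n)

/-- `Δ_A(U)`, the diameter of `U` with respect to `ρ_A`. -/
def DeltaA {n m d : ℕ} (A : (Fin (d + 1) → Fin n) → Fin m → ℝ)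
    (U : Set (Pt n m d)) : ℝ :=
  sSup { r : ℝ | ∃ z ∈ U, ∃ w ∈ U, r = rhoA A z w }

/-- `(B_2^n)^{d-1} × T`. -/
def ballSet (n m d : ℕ) (T : Set (Fin m → ℝ)) : Set (Pt n m d) :=
  { z | (∀ k, ∑ j, z.1 k j ^ 2 ≤ 1) ∧ z.2 ∈ T }

/-- `W^U_I(α_A)`. -/
def WUI {n m d : ℕ} (A : (Fin (d + 1) → Fin n) → Fin m → ℝ)
    (U : Set (Pt n m d)) (I : Finset (PIdx d)) : ℝ :=
  sSup { r : ℝ | ∃ z ∈ U, r = ∫ ω : PIdx d × Fin n → ℝ,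
    Real.sqrt (∑ i1 : Fin n, (∑ i' : PIdx d → Fin n, ∑ j : Fin m,
      A (ext0 i1 i') j *
        (∏ k : PIdx d, if k ∈ I then ω (k, i' k) else z.1 k (i' k)) * z.2 j) ^ 2)
    ∂ stdGaussian (PIdx d × Fin n) }

/-- `V^U_I(β_A)`. -/
def VUI {n m d : ℕ} (A : (Fin (d + 1) → Fin n) → Fin m → ℝ)
    (T : Set (Fin m → ℝ)) (U : Set (Pt n m d)) (I : Finset (PIdx d)) : ℝ :=
  sSup { r : ℝ | ∃ z ∈ U, r = ∫ ω : PIdx d × Fin n → ℝ,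
    (∫ g : Fin n → ℝ, sSup { s : ℝ | ∃ t' ∈ T,
        s = ∑ i1 : Fin n, ∑ i' : PIdx d → Fin n, ∑ j : Fin m,
          A (ext0 i1 i') j * g i1 *
            (∏ k : PIdx d, if k ∈ I then ω (k, i' k) else z.1 k (i' k)) * t' j }
      ∂ stdGaussian (Fin n))
    ∂ stdGaussian (PIdx d × Fin n) }

/-- `W^U_d(α_A, s)`. -/
def Wd {n m d : ℕ} (A : (Fin (d + 1) → Fin n) → Fin m → ℝ)
    (U : Set (Pt n m d)) (s : ℝ) : ℝ :=
  ∑ k ∈ Finset.Icc 1 d, s ^ k *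
    ∑ I ∈ Finset.univ.filter (fun I : Finset (PIdx d) => I.card = k), WUI A U I

/-- `V^U_d(β_A, s)`. -/
def Vd {n m d : ℕ} (A : (Fin (d + 1) → Fin n) → Fin m → ℝ)
    (T : Set (Fin m → ℝ)) (U : Set (Pt n m d)) (s : ℝ) : ℝ :=
  ∑ k ∈ Finset.range (d + 1), s ^ (k + 1) *
    ∑ I ∈ Finset.univ.filter (fun I : Finset (PIdx d) => I.card = k), VUI A T U I

/-- `‖A ⋅_j x_j‖_{P'∣P}`: the norm of the contraction of `A` in coordinate `j0`
against the vector `xj`. -/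
def chaosNormTFix {n m d : ℕ} (A : (Fin (d + 1) → Fin n) → Fin m → ℝ)
    (T : Set (Fin m → ℝ)) (P' P : Finset (Finset (Fin (d + 1))))
    (j0 : Fin (d + 1)) (xj : Fin n → ℝ) : ℝ :=
  sSup { r : ℝ | ∃ x : (I : Finset (Fin (d + 1))) → ({l // l ∈ I} → Fin n) → ℝ,
    (∀ I ∈ P, ∑ v : {l // l ∈ I} → Fin n, x I v ^ 2 ≤ 1) ∧
    r = ∫ ω : GIdx (d + 1) n → ℝ,
        sSup { s : ℝ | ∃ t ∈ T, s = ∑ i : Fin (d + 1) → Fin n, ∑ j : Fin m,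
          (∏ I ∈ P, x I fun l => i l.1) * xj (i j0) *
            (∏ J ∈ P', ω ⟨J, fun l => i l.1⟩) * A i j * t j }
        ∂ stdGaussian (GIdx (d + 1) n) }

/-- the norm `α̂_A`. -/
def hatAlpha {n m d : ℕ} (A : (Fin (d + 1) → Fin n) → Fin m → ℝ)
    (T : Set (Fin m → ℝ)) (x : PIdx d → Fin n → ℝ) : ℝ :=
  ∑ j : PIdx d,
    ∑ PP ∈ Finset.univ.filter (fun PP :
        Finset (Finset (Fin (d + 1))) × Finset (Finset (Fin (d + 1))) =>
        IsPartitionPair (Finset.univ.erase j.1) PP.1 PP.2 ∧ PP.1.card = d - 1),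
      chaosNormTFix A T PP.2 PP.1 j.1 (x j)

/-- `α̂_A(U)`. -/
def hatAlphaSup {n m d : ℕ} (A : (Fin (d + 1) → Fin n) → Fin m → ℝ)
    (T : Set (Fin m → ℝ)) (U : Set (Pt n m d)) : ℝ :=
  sSup { r : ℝ | ∃ z ∈ U, r = hatAlpha A T z.1 }

end

open scoped ENNReal

/-! ### Prékopa–Leindler and property (τ) on the line -/

/-- One-dimensional Brunn–Minkowski: the translates `K + min L` and `max K + L` both lie in `C` and
meet in a single point. -/
lemma volume_add_le_of_compact {K L C : Set ℝ} (hK : IsCompact K) (hL : IsCompact L)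
    (hKn : K.Nonempty) (hLn : L.Nonempty) (h : ∀ x ∈ K, ∀ y ∈ L, x + y ∈ C) :
    volume K + volume L ≤ volume C := by
  obtain ⟨M, hMK, hM⟩ := hK.exists_isGreatest hKn
  obtain ⟨m, hmL, hm⟩ := hL.exists_isLeast hLn
  have h1 : volume ((fun x => x + m) '' K) = volume K := by
    simp [Set.image_add_right]
  have h2 : volume ((fun x => M + x) '' L) = volume L := by
    simp [Set.image_add_left]
  rw [← h1, ← h2, ← measure_union₀]
  · apply measure_mono
    rintro _ (⟨x, hx, rfl⟩ | ⟨y, hy, rfl⟩)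
    · exact h x hx m hmL
    · exact h M hMK y hy
  · exact (hL.image (by fun_prop)).measurableSet.nullMeasurableSet
  · apply measure_mono_null (t := {M + m}) _ (by simp)
    rintro z ⟨⟨x, hx, rfl⟩, ⟨y, hy, hxy⟩⟩
    have := hM hx
    have := hm hy
    simp only [Set.mem_singleton_iff]
    dsimp at hxy ⊢
    linarith

/-- One-dimensional Brunn–Minkowski inequality. -/
lemma volume_add_le {A B C : Set ℝ} (hA : MeasurableSet A) (hB : MeasurableSet B)
    (hAn : A.Nonempty) (hBn : B.Nonempty) (h : ∀ x ∈ A, ∀ y ∈ B, x + y ∈ C) :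
    volume A + volume B ≤ volume C := by
  obtain ⟨a, ha⟩ := hAn
  obtain ⟨b, hb⟩ := hBn
  rw [hA.measure_eq_iSup_isCompact, hB.measure_eq_iSup_isCompact]
  simp only [iSup_and']
  refine ENNReal.biSup_add_biSup_le' ⟨∅, by simp⟩ ⟨∅, by simp⟩ ?_
  rintro K ⟨hKA, hK⟩ L ⟨hLB, hL⟩
  refine (add_le_add (measure_mono (Set.subset_insert a K))
    (measure_mono (Set.subset_insert b L))).trans ?_
  refine volume_add_le_of_compact (hK.insert a) (hL.insert b) (Set.insert_nonempty _ _)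
    (Set.insert_nonempty _ _) fun x hx y hy => h x ?_ y ?_
  · exact Set.insert_subset ha hKA hx
  · exact Set.insert_subset hb hLB hy

/-- Prékopa–Leindler inequality on the line, for a Gaussian middle function. -/
lemma prekopa_leindler_real {f g : ℝ → ℝ} (hf : Measurable f) (hg : Measurable g)
    (hf0 : ∀ x, 0 ≤ f x) (hg0 : ∀ x, 0 ≤ g x) (hfn : ∃ x, 0 < f x) (hgn : ∃ x, 0 < g x)
    (h : ∀ x y, f x * g y ≤ Real.exp (-(x + y) ^ 2 / 4)) :
    (∫⁻ x, ENNReal.ofReal (f x)) * (∫⁻ x, ENNReal.ofReal (g x))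
      ≤ ENNReal.ofReal (2 * Real.pi) := by
  have hexp : ∀ x y : ℝ, Real.exp (-(x + y) ^ 2 / 4) ≤ 1 := fun x y =>
    Real.exp_le_one_iff.2 (by nlinarith [sq_nonneg (x + y)])
  obtain ⟨x₀, hx₀⟩ := hfn
  obtain ⟨y₀, hy₀⟩ := hgn
  have hfb : BddAbove (Set.range f) := ⟨1 / g y₀, by
    rintro _ ⟨x, rfl⟩
    rw [le_div_iff₀ hy₀]
    exact (h x y₀).trans (hexp _ _)⟩
  have hgb : BddAbove (Set.range g) := ⟨1 / f x₀, by
    rintro _ ⟨y, rfl⟩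
    rw [le_div_iff₀ hx₀, mul_comm]
    exact (h x₀ y).trans (hexp _ _)⟩
  set a := ⨆ x, f x with ha_def
  set b := ⨆ x, g x with hb_def
  have ha : 0 < a := hx₀.trans_le (le_ciSup hfb x₀)
  have hb : 0 < b := hy₀.trans_le (le_ciSup hgb y₀)
  set c := Real.sqrt (a * b) with hc_def
  have hc : 0 < c := Real.sqrt_pos.2 (mul_pos ha hb)
  have hc2 : c * c = a * b := Real.mul_self_sqrt (mul_pos ha hb).le
  set k : ℝ → ℝ := fun w => Real.exp (-(1 / 8) * w ^ 2) / c with hk_def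
  have hkm : Measurable k := by fun_prop
  -- Normalised by their suprema, both functions have nonempty superlevel sets at each level `t < 1`,
  -- so Brunn–Minkowski applies level by level and the layer-cake formula integrates it.
  have key : (∫⁻ x, ENNReal.ofReal (f x / a)) + (∫⁻ x, ENNReal.ofReal (g x / b))
      ≤ ∫⁻ w, ENNReal.ofReal (k w) := by
    rw [lintegral_eq_lintegral_meas_lt volume (.of_forall fun x => div_nonneg (hf0 x) ha.le)
        (hf.div_const a).aemeasurable,
      lintegral_eq_lintegral_meas_lt volume (.of_forall fun x => div_nonneg (hg0 x) hb.le)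
        (hg.div_const b).aemeasurable,
      lintegral_eq_lintegral_meas_lt volume
        (.of_forall fun x => div_nonneg (Real.exp_nonneg _) hc.le) hkm.aemeasurable,
      ← lintegral_add_left]
    · refine setLIntegral_mono' measurableSet_Ioi fun t ht => ?_
      have ht : 0 < t := ht
      rcases lt_or_ge t 1 with h1 | h1
      · refine volume_add_le (measurableSet_lt measurable_const (hf.div_const a))
          (measurableSet_lt measurable_const (hg.div_const b)) ?_ ?_ ?_
        · obtain ⟨x, hx⟩ := exists_lt_of_lt_ciSup (show t * a < ⨆ x, f x by
            rw [← ha_def]; nlinarith)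
          exact ⟨x, by simpa [lt_div_iff₀ ha] using hx⟩
        · obtain ⟨x, hx⟩ := exists_lt_of_lt_ciSup (show t * b < ⨆ x, g x by
            rw [← hb_def]; nlinarith)
          exact ⟨x, by simpa [lt_div_iff₀ hb] using hx⟩
        · intro x hx y hy
          simp only [Set.mem_ofPred_eq, lt_div_iff₀ ha, lt_div_iff₀ hb] at hx hy
          simp only [Set.mem_ofPred_eq, lt_div_iff₀ hc]
          have h3 : (t * c) * (t * c) < Real.exp (-(x + y) ^ 2 / 4) := by
            calc (t * c) * (t * c) = (t * a) * (t * b) := by linear_combination t ^ 2 * hc2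
              _ < f x * g y := mul_lt_mul'' hx hy (by positivity) (by positivity)
              _ ≤ _ := h x y
          have h4 : Real.exp (-(x + y) ^ 2 / 4) =
              Real.exp (-(1 / 8) * (x + y) ^ 2) * Real.exp (-(1 / 8) * (x + y) ^ 2) := by
            rw [← Real.exp_add]; ring_nf
          rw [h4] at h3
          exact lt_of_mul_self_lt_mul_self₀ (Real.exp_nonneg _) h3
      · have e1 : {x | t < f x / a} = ∅ := by
          ext x
          simp only [Set.mem_ofPred_eq, Set.mem_empty_iff_false, iff_false, not_lt]
          exact ((div_le_one ha).2 (le_ciSup hfb x)).trans h1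
        have e2 : {x | t < g x / b} = ∅ := by
          ext x
          simp only [Set.mem_ofPred_eq, Set.mem_empty_iff_false, iff_false, not_lt]
          exact ((div_le_one hb).2 (le_ciSup hgb x)).trans h1
        rw [e1, e2]; simp
    · exact Antitone.measurable fun s t hst => measure_mono fun x hx => lt_of_le_of_lt hst hx
  have hk : ∫⁻ w, ENNReal.ofReal (k w) = ENNReal.ofReal (Real.sqrt (8 * Real.pi) / c) := by
    rw [← ofReal_integral_eq_lintegral_ofReal]
    · congr 1
      simp only [hk_def, integral_div, integral_gaussian]
      congr 2
      ring
    · exact (integrable_exp_neg_mul_sq (by norm_num)).div_const c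
    · exact .of_forall fun x => div_nonneg (Real.exp_nonneg _) hc.le
  rw [hk] at key
  have hX : (∫⁻ x, ENNReal.ofReal (f x / a)) ≠ ∞ :=
    ne_top_of_le_ne_top ENNReal.ofReal_ne_top (le_self_add.trans key)
  have hY : (∫⁻ x, ENNReal.ofReal (g x / b)) ≠ ∞ :=
    ne_top_of_le_ne_top ENNReal.ofReal_ne_top (le_add_self.trans key)
  have ef : ∫⁻ x, ENNReal.ofReal (f x)
      = ENNReal.ofReal a * ∫⁻ x, ENNReal.ofReal (f x / a) := by
    rw [← lintegral_const_mul _ (by fun_prop)]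
    refine lintegral_congr fun x => ?_
    rw [← ENNReal.ofReal_mul ha.le, mul_div_cancel₀ _ ha.ne']
  have eg : ∫⁻ x, ENNReal.ofReal (g x)
      = ENNReal.ofReal b * ∫⁻ x, ENNReal.ofReal (g x / b) := by
    rw [← lintegral_const_mul _ (by fun_prop)]
    refine lintegral_congr fun x => ?_
    rw [← ENNReal.ofReal_mul hb.le, mul_div_cancel₀ _ hb.ne']
  rw [ef, eg]
  set X := ∫⁻ x, ENNReal.ofReal (f x / a)
  set Y := ∫⁻ x, ENNReal.ofReal (g x / b)
  rw [← ENNReal.ofReal_toReal hX, ← ENNReal.ofReal_toReal hY,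
    ← ENNReal.ofReal_add ENNReal.toReal_nonneg ENNReal.toReal_nonneg,
    ENNReal.ofReal_le_ofReal_iff (by positivity)] at key
  rw [← ENNReal.ofReal_toReal hX, ← ENNReal.ofReal_toReal hY,
    ← ENNReal.ofReal_mul ha.le, ← ENNReal.ofReal_mul hb.le, ← ENNReal.ofReal_mul (by positivity)]
  apply ENNReal.ofReal_le_ofReal
  have hx := ENNReal.toReal_nonneg (a := X)
  have hy := ENNReal.toReal_nonneg (a := Y)
  rw [le_div_iff₀ hc] at key
  have h5 : ((X.toReal + Y.toReal) * c) * ((X.toReal + Y.toReal) * c) ≤ 8 * Real.pi := by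
    refine (mul_self_le_mul_self (by positivity) key).trans ?_
    rw [Real.mul_self_sqrt (by positivity)]
  have h6 : ((X.toReal + Y.toReal) * c) * ((X.toReal + Y.toReal) * c)
      = (X.toReal + Y.toReal) ^ 2 * (a * b) := by
    linear_combination (X.toReal + Y.toReal) ^ 2 * hc2
  nlinarith [mul_nonneg (mul_pos ha hb).le (sq_nonneg (X.toReal - Y.toReal))]

/-- Maurey's property (τ) for the one-dimensional standard Gaussian measure. -/
lemma tau_one {F G : ℝ → ℝ≥0∞} (hF : Measurable F) (hG : Measurable G)
    (h : ∀ x y, F x * G y ≤ ENNReal.ofReal (Real.exp ((x - y) ^ 2 / 4))) :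
    (∫⁻ x, F x ∂gaussianReal 0 1) * (∫⁻ x, G x ∂gaussianReal 0 1) ≤ 1 := by
  rcases em (∃ x, F x ≠ 0) with ⟨x₀, hx₀⟩ | hF0
  swap
  · push Not at hF0
    simp [hF0]
  rcases em (∃ x, G x ≠ 0) with ⟨y₀, hy₀⟩ | hG0
  swap
  · push Not at hG0
    simp [hG0]
  have hFt : ∀ x, F x ≠ ∞ := fun x hx => by
    have := h x y₀
    rw [hx, ENNReal.top_mul hy₀] at this
    exact ENNReal.ofReal_ne_top (top_le_iff.1 this)
  have hGt : ∀ x, G x ≠ ∞ := fun x hx => by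
    have := h x₀ x
    rw [hx, ENNReal.mul_top hx₀] at this
    exact ENNReal.ofReal_ne_top (top_le_iff.1 this)
  have conv : ∀ H : ℝ → ℝ≥0∞, Measurable H → (∀ x, H x ≠ ∞) → ∫⁻ x, H x ∂gaussianReal 0 1
      = ENNReal.ofReal (Real.sqrt (2 * Real.pi))⁻¹ *
        ∫⁻ x, ENNReal.ofReal ((H x).toReal * Real.exp (-x ^ 2 / 2)) := by
    intro H hH hHt
    rw [gaussianReal_of_var_ne_zero _ one_ne_zero,
      lintegral_withDensity_eq_lintegral_mul _ (measurable_gaussianPDF _ _) hH,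
      ← lintegral_const_mul _ (by fun_prop)]
    refine lintegral_congr fun x => ?_
    rw [Pi.mul_apply, gaussianPDF, gaussianPDFReal, mul_comm,
      ENNReal.ofReal_mul ENNReal.toReal_nonneg, ENNReal.ofReal_toReal (hHt x)]
    simp only [sub_zero, NNReal.coe_one, mul_one]
    rw [ENNReal.ofReal_mul (by positivity)]
    ring
  rw [conv F hF hFt, conv G hG hGt]
  have := prekopa_leindler_real (f := fun x => (F x).toReal * Real.exp (-x ^ 2 / 2))
    (g := fun x => (G x).toReal * Real.exp (-x ^ 2 / 2)) (by fun_prop) (by fun_prop)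
    (fun x => by positivity) (fun x => by positivity)
    ⟨x₀, mul_pos (ENNReal.toReal_pos hx₀ (hFt _)) (Real.exp_pos _)⟩
    ⟨y₀, mul_pos (ENNReal.toReal_pos hy₀ (hGt _)) (Real.exp_pos _)⟩ ?_
  · calc _ = (ENNReal.ofReal (Real.sqrt (2 * Real.pi))⁻¹ *
          ENNReal.ofReal (Real.sqrt (2 * Real.pi))⁻¹) * _ := by rw [mul_mul_mul_comm]
      _ ≤ (ENNReal.ofReal (Real.sqrt (2 * Real.pi))⁻¹ *
          ENNReal.ofReal (Real.sqrt (2 * Real.pi))⁻¹) * ENNReal.ofReal (2 * Real.pi) := by gcongr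
      _ = 1 := by
        rw [← ENNReal.ofReal_mul (by positivity), ← ENNReal.ofReal_mul (by positivity),
          ← mul_inv, Real.mul_self_sqrt (by positivity), inv_mul_cancel₀ (by positivity)]
        simp
  · intro x y
    have h1 : (F x).toReal * (G y).toReal ≤ Real.exp ((x - y) ^ 2 / 4) := by
      rw [← ENNReal.toReal_mul]
      exact ENNReal.toReal_le_of_le_ofReal (Real.exp_nonneg _) (h x y)
    calc _ = ((F x).toReal * (G y).toReal) * (Real.exp (-x ^ 2 / 2) * Real.exp (-y ^ 2 / 2)) := by
          ring
      _ ≤ Real.exp ((x - y) ^ 2 / 4) * (Real.exp (-x ^ 2 / 2) * Real.exp (-y ^ 2 / 2)) := by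
          gcongr
      _ = _ := by rw [← Real.exp_add, ← Real.exp_add]; ring_nf

/-! ### Property (τ) and Cameron–Martin for the standard Gaussian measure -/

instance {ι : Type*} [Fintype ι] : IsProbabilityMeasure (stdGaussian ι) := by
  unfold _root_.stdGaussian; infer_instance

lemma lintegral_stdGaussian_succ {n : ℕ} {F : (Fin (n + 1) → ℝ) → ℝ≥0∞} (hF : Measurable F) :
    ∫⁻ x, F x ∂stdGaussian (Fin (n + 1))
      = ∫⁻ t, ∫⁻ h, F (Fin.cons t h) ∂stdGaussian (Fin n) ∂gaussianReal 0 1 := by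
  have hm := (measurePreserving_piFinSuccAbove
    (fun _ : Fin (n + 1) => gaussianReal 0 1) 0).symm
  have := hm.lintegral_comp hF
  unfold _root_.stdGaussian
  rw [← this]
  refine (lintegral_prod (μ := gaussianReal 0 1)
    (ν := Measure.pi fun _ : Fin n => gaussianReal 0 1)
    _ (hF.comp hm.measurable).aemeasurable).trans ?_
  refine lintegral_congr fun t => lintegral_congr fun h => ?_
  simp [MeasurableEquiv.piFinSuccAbove, Fin.insertNthEquiv]

lemma lintegral_stdGaussian_reindex {ι κ : Type*} [Fintype ι] [Fintype κ] (e : ι ≃ κ)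
    {F : (ι → ℝ) → ℝ≥0∞} (hF : Measurable F) :
    ∫⁻ x, F x ∂stdGaussian ι = ∫⁻ h, F (fun i => h (e i)) ∂stdGaussian κ := by
  have hm := measurePreserving_piCongrLeft (fun _ : ι => gaussianReal 0 1) e.symm
  have := hm.lintegral_comp hF
  unfold _root_.stdGaussian
  rw [← this]
  refine lintegral_congr fun h => ?_
  congr 1
  ext i
  have := MeasurableEquiv.piCongrLeft_apply_apply (β := fun _ : ι => ℝ) (e := e.symm) h (e i)
  simpa using this

/-- Property (τ) for the standard Gaussian measure on `Fin n → ℝ`, tensorised from the line by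
induction on the number of coordinates. -/
lemma tau_fin {n : ℕ} : ∀ {F G : (Fin n → ℝ) → ℝ≥0∞}, Measurable F → Measurable G →
    (∀ x y, F x * G y ≤ ENNReal.ofReal (Real.exp ((∑ i, (x i - y i) ^ 2) / 4))) →
    (∫⁻ x, F x ∂stdGaussian (Fin n)) * (∫⁻ x, G x ∂stdGaussian (Fin n)) ≤ 1 := by
  induction n with
  | zero =>
    intro F G hF hG h
    have e : ∀ H : (Fin 0 → ℝ) → ℝ≥0∞, ∫⁻ x, H x ∂stdGaussian (Fin 0) = H 0 := fun H => by
      rw [lintegral_congr (g := fun _ => H 0) (fun x => by rw [Subsingleton.elim x 0])]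
      simp
    rw [e, e]
    simpa using h 0 0
  | succ n ih =>
    intro F G hF hG h
    have mc : Measurable fun p : ℝ × (Fin n → ℝ) => (Fin.cons p.1 p.2 : Fin (n + 1) → ℝ) := by
      refine measurable_pi_lambda _ fun i => ?_
      refine Fin.cases ?_ (fun i => ?_) i
      · simpa using measurable_fst
      · simp only [Fin.cons_succ]
        exact (measurable_pi_apply i).comp measurable_snd
    rw [lintegral_stdGaussian_succ hF, lintegral_stdGaussian_succ hG]
    refine tau_one (hF.comp mc).lintegral_prod_right' (hG.comp mc).lintegral_prod_right' ?_
    intro t s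
    have hF' : Measurable fun h => F (Fin.cons t h) := hF.comp (mc.comp measurable_prodMk_left)
    have hG' : Measurable fun h => G (Fin.cons s h) := hG.comp (mc.comp measurable_prodMk_left)
    set K : ℝ≥0∞ := ENNReal.ofReal (Real.exp ((t - s) ^ 2 / 4)) with hK
    have hK0 : K ≠ 0 := by simp [hK, Real.exp_pos]
    have hKt : K ≠ ∞ := ENNReal.ofReal_ne_top
    have := ih (F := fun h => K⁻¹ * F (Fin.cons t h)) (G := fun h => G (Fin.cons s h))
      (hF'.const_mul _) hG' ?_
    · rw [lintegral_const_mul _ hF', mul_assoc] at this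
      calc _ = K * (K⁻¹ * _) := by rw [← mul_assoc, ENNReal.mul_inv_cancel hK0 hKt, one_mul]
        _ ≤ K * 1 := by gcongr
        _ = K := mul_one K
    · intro x y
      have h1 := h (Fin.cons t x) (Fin.cons s y)
      rw [Fin.sum_univ_succ] at h1
      simp only [Fin.cons_zero, Fin.cons_succ, add_div, Real.exp_add] at h1
      rw [ENNReal.ofReal_mul (Real.exp_nonneg _)] at h1
      calc _ = K⁻¹ * (F (Fin.cons t x) * G (Fin.cons s y)) := mul_assoc _ _ _
        _ ≤ K⁻¹ * (K * _) := by gcongr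
        _ = _ := by rw [← mul_assoc, ENNReal.inv_mul_cancel hK0 hKt, one_mul]

/-- Maurey's property (τ): it tensorizes from the line to every finite product. -/
lemma tau_stdGaussian {ι : Type*} [Fintype ι] {F G : (ι → ℝ) → ℝ≥0∞} (hF : Measurable F)
    (hG : Measurable G)
    (h : ∀ x y, F x * G y ≤ ENNReal.ofReal (Real.exp ((∑ i, (x i - y i) ^ 2) / 4))) :
    (∫⁻ x, F x ∂stdGaussian ι) * (∫⁻ x, G x ∂stdGaussian ι) ≤ 1 := by
  let e := Fintype.equivFin ι
  rw [lintegral_stdGaussian_reindex e hF, lintegral_stdGaussian_reindex e hG]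
  refine tau_fin (hF.comp (by fun_prop)) (hG.comp (by fun_prop)) fun x y => ?_
  refine (h _ _).trans_eq ?_
  rw [e.sum_comp (fun i => (x i - y i) ^ 2)]

lemma cameron_martin_one (a : ℝ) {F : ℝ → ℝ≥0∞} (hF : Measurable F) :
    ∫⁻ x, F x ∂gaussianReal 0 1
      = ∫⁻ x, ENNReal.ofReal (Real.exp (-(a * x) - a ^ 2 / 2)) * F (x + a) ∂gaussianReal 0 1 := by
  rw [gaussianReal_of_var_ne_zero _ one_ne_zero,
    lintegral_withDensity_eq_lintegral_mul _ (measurable_gaussianPDF _ _) hF,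
    lintegral_withDensity_eq_lintegral_mul _ (measurable_gaussianPDF _ _) (by fun_prop),
    ← lintegral_add_right_eq_self _ a]
  refine lintegral_congr fun x => ?_
  simp only [Pi.mul_apply, gaussianPDF, gaussianPDFReal]
  rw [← mul_assoc, ← ENNReal.ofReal_mul (by positivity), mul_assoc _ (Real.exp _) (Real.exp _),
    ← Real.exp_add]
  congr 4
  simp
  ring

lemma cameron_martin_fin {n : ℕ} : ∀ (a : Fin n → ℝ) {F : (Fin n → ℝ) → ℝ≥0∞}, Measurable F →
    ∫⁻ x, F x ∂stdGaussian (Fin n)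
      = ∫⁻ x, ENNReal.ofReal (Real.exp (-(∑ i, a i * x i) - (∑ i, a i ^ 2) / 2)) * F (x + a)
        ∂stdGaussian (Fin n) := by
  induction n with
  | zero =>
    intro a F hF
    refine lintegral_congr fun x => ?_
    rw [Subsingleton.elim (x + a) x]
    simp
  | succ n ih =>
    intro a F hF
    have mc : Measurable fun p : ℝ × (Fin n → ℝ) => (Fin.cons p.1 p.2 : Fin (n + 1) → ℝ) := by
      refine measurable_pi_lambda _ fun i => ?_
      refine Fin.cases ?_ (fun i => ?_) i
      · simpa using measurable_fst
      · simp only [Fin.cons_succ]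
        exact (measurable_pi_apply i).comp measurable_snd
    rw [lintegral_stdGaussian_succ hF, lintegral_stdGaussian_succ (by fun_prop)]
    refine (cameron_martin_one (a 0) (hF.comp mc).lintegral_prod_right').trans ?_
    refine lintegral_congr fun t => ?_
    have hF' : ∀ t, Measurable fun h => F (Fin.cons t h) := fun t =>
      hF.comp (mc.comp measurable_prodMk_left)
    simp only [Function.comp]
    rw [ih (Fin.tail a) (hF' _), ← lintegral_const_mul]
    · refine lintegral_congr fun h => ?_
      rw [← mul_assoc, ← ENNReal.ofReal_mul (Real.exp_nonneg _), ← Real.exp_add]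
      congr 3
      · rw [Fin.sum_univ_succ, Fin.sum_univ_succ]
        simp [Fin.tail]
        ring
      · ext i
        refine Fin.cases ?_ (fun i => ?_) i <;> simp [Fin.tail]
    · have := (hF' (t + a 0)).comp (measurable_add_const (Fin.tail a))
      exact Measurable.mul (by fun_prop) this

/-- Cameron–Martin formula for a finite product of standard Gaussians. -/
lemma cameron_martin {ι : Type*} [Fintype ι] (a : ι → ℝ) {F : (ι → ℝ) → ℝ≥0∞}
    (hF : Measurable F) :
    ∫⁻ x, F x ∂stdGaussian ι
      = ∫⁻ x, ENNReal.ofReal (Real.exp (-(∑ i, a i * x i) - (∑ i, a i ^ 2) / 2)) * F (x + a)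
        ∂stdGaussian ι := by
  let e := Fintype.equivFin ι
  rw [lintegral_stdGaussian_reindex e hF, lintegral_stdGaussian_reindex e (by fun_prop)]
  refine (cameron_martin_fin (fun i => a (e.symm i)) (F := fun h => F fun i => h (e i))
    (hF.comp (by fun_prop))).trans ?_
  refine lintegral_congr fun x => ?_
  rw [← e.sum_comp, ← e.sum_comp]
  simp only [Equiv.symm_apply_apply]
  congr 2
  ext i
  simp

/-! ### Gaussian integrals of products over blocks -/

lemma prod_coord_eq {κ : Type*} [Fintype κ] (s : Finset κ) (φ : κ → ℝ → ℝ) (h : κ → ℝ) :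
    ∏ q ∈ s, φ q (h q) = ∏ q, (if q ∈ s then φ q else fun _ => 1) (h q) := by
  rw [← Finset.prod_subset (Finset.subset_univ s)]
  · exact Finset.prod_congr rfl fun q hq => by simp [hq]
  · intro q _ hq
    simp [hq]

lemma integral_prod_coord {κ : Type*} [Fintype κ] (s : Finset κ) (φ : κ → ℝ → ℝ) :
    ∫ h, ∏ q ∈ s, φ q (h q) ∂stdGaussian κ = ∏ q ∈ s, ∫ t, φ q t ∂gaussianReal 0 1 := by
  rw [show (fun h : κ → ℝ => ∏ q ∈ s, φ q (h q)) = _ from funext fun h => prod_coord_eq s φ h]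
  unfold _root_.stdGaussian
  rw [integral_fintype_prod_eq_prod, ← Finset.prod_subset (Finset.subset_univ s)]
  · exact Finset.prod_congr rfl fun q hq => by simp [hq]
  · intro q _ hq
    simp [hq]

lemma integrable_prod_coord {κ : Type*} [Fintype κ] (s : Finset κ) (φ : κ → ℝ → ℝ)
    (hφ : ∀ q ∈ s, Integrable (φ q) (gaussianReal 0 1)) :
    Integrable (fun h => ∏ q ∈ s, φ q (h q)) (stdGaussian κ) := by
  rw [show (fun h : κ → ℝ => ∏ q ∈ s, φ q (h q)) = _ from funext fun h => prod_coord_eq s φ h]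
  unfold _root_.stdGaussian
  refine Integrable.fintype_prod fun q => ?_
  by_cases hq : q ∈ s
  · simpa [hq] using hφ q hq
  · simp [hq]

lemma integrable_id_gauss : Integrable (fun t : ℝ => t) (gaussianReal 0 1) :=
  (memLp_id_gaussianReal 1).integrable le_rfl

lemma integrable_sq_gauss : Integrable (fun t : ℝ => t ^ 2) (gaussianReal 0 1) :=
  (memLp_id_gaussianReal 2).integrable_sq

lemma integral_sq_gauss : ∫ t : ℝ, t ^ 2 ∂gaussianReal 0 1 = 1 := by
  have := variance_fun_id_gaussianReal (μ := 0) (v := 1)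
  rw [variance_of_integral_eq_zero (by fun_prop) (by simp)] at this
  simpa using this

lemma integral_affine (a ε : ℝ) : ∫ t : ℝ, (a + ε * t) ∂gaussianReal 0 1 = a := by
  rw [integral_add (by fun_prop) (integrable_id_gauss.const_mul _), integral_const_mul]
  simp

lemma integral_affine_sq (a ε : ℝ) :
    ∫ t : ℝ, (a + ε * t) * (a + ε * t) ∂gaussianReal 0 1 = a * a + ε ^ 2 := by
  have e : ∀ t : ℝ, (a + ε * t) * (a + ε * t) = a * a + ((2 * a * ε) * t + ε ^ 2 * t ^ 2) :=
    fun t => by ring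
  simp_rw [e]
  rw [integral_add (by fun_prop) (by
    exact (integrable_id_gauss.const_mul _).add (integrable_sq_gauss.const_mul _)), integral_add (integrable_id_gauss.const_mul _)
    (integrable_sq_gauss.const_mul _), integral_const_mul (2 * a * ε),
    integral_const_mul (ε ^ 2), integral_sq_gauss]
  simp

lemma integrable_affine (a ε : ℝ) : Integrable (fun t : ℝ => a + ε * t) (gaussianReal 0 1) :=
  (integrable_const _).add (integrable_id_gauss.const_mul _)

lemma integrable_affine_sq (a ε : ℝ) :
    Integrable (fun t : ℝ => (a + ε * t) * (a + ε * t)) (gaussianReal 0 1) := by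
  have e : ∀ t : ℝ, (a + ε * t) * (a + ε * t) = a * a + ((2 * a * ε) * t + ε ^ 2 * t ^ 2) :=
    fun t => by ring
  simp_rw [e]
  exact (integrable_const _).add ((integrable_id_gauss.const_mul _).add
    (integrable_sq_gauss.const_mul _))

/-- The restriction of a multi-index `i` to the block `I`. -/
def blk {D n : ℕ} (I : Finset (Fin D)) (i : Fin D → Fin n) : GIdx D n := ⟨I, fun l => i l.1⟩

lemma blk_injective {D n : ℕ} (i : Fin D → Fin n) :
    Function.Injective fun I : Finset (Fin D) => blk I i := fun _ _ h => congrArg Sigma.fst h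

lemma blk_eq_iff {D n : ℕ} {I : Finset (Fin D)} {i i' : Fin D → Fin n} :
    blk I i = blk I i' ↔ ∀ l ∈ I, i l = i' l := by
  unfold blk
  simp only [Sigma.mk.injEq, heq_eq_eq, true_and]
  constructor
  · intro h l hl
    exact congrFun h ⟨l, hl⟩
  · intro h
    funext l
    exact h l.1 l.2

lemma prod_blk_eq_prod_image {D n : ℕ} (P : Finset (Finset (Fin D))) (i : Fin D → Fin n)
    (φ : GIdx D n → ℝ) :
    ∏ I ∈ P, φ (blk I i) = ∏ q ∈ P.image fun I => blk I i, φ q := by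
  rw [Finset.prod_image]
  exact (blk_injective i).injOn

lemma integral_prod_affine {D n : ℕ} (P : Finset (Finset (Fin D))) (i : Fin D → Fin n)
    (x : GIdx D n → ℝ) (ε : ℝ) :
    ∫ h, ∏ I ∈ P, (x (blk I i) + ε * h (blk I i)) ∂stdGaussian (GIdx D n)
      = ∏ I ∈ P, x (blk I i) := by
  simp_rw [fun h : GIdx D n → ℝ => prod_blk_eq_prod_image P i fun q => x q + ε * h q]
  rw [integral_prod_coord _ fun q t => x q + ε * t]
  simp_rw [integral_affine]
  rw [← prod_blk_eq_prod_image P i x]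

lemma integrable_prod_affine {D n : ℕ} (P : Finset (Finset (Fin D))) (i : Fin D → Fin n)
    (x : GIdx D n → ℝ) (ε : ℝ) :
    Integrable (fun h => ∏ I ∈ P, (x (blk I i) + ε * h (blk I i))) (stdGaussian (GIdx D n)) := by
  simp_rw [fun h : GIdx D n → ℝ => prod_blk_eq_prod_image P i fun q => x q + ε * h q]
  exact integrable_prod_coord _ (fun q t => x q + ε * t) fun q _ => integrable_affine _ _

lemma integrable_prod_blk {D n : ℕ} (P : Finset (Finset (Fin D))) (i : Fin D → Fin n) :
    Integrable (fun h => ∏ I ∈ P, h (blk I i)) (stdGaussian (GIdx D n)) := by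
  simpa using integrable_prod_affine P i 0 1

/-- The one-dimensional factors of the product in `integral_prod_affine_pair`. -/
noncomputable def pairFactor {D n : ℕ} (i i' : Fin D → Fin n) (x : GIdx D n → ℝ) (ε : ℝ)
    (q : GIdx D n) (t : ℝ) : ℝ :=
  (if q = blk q.1 i then x q + ε * t else 1) * (if q = blk q.1 i' then x q + ε * t else 1)

lemma prod_affine_eq_sigma {D n : ℕ} (P : Finset (Finset (Fin D))) (i : Fin D → Fin n)
    (y : GIdx D n → ℝ) :
    ∏ I ∈ P, y (blk I i)
      = ∏ q ∈ P.sigma fun _ => Finset.univ, (if q = blk q.1 i then y q else 1) := by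
  rw [Finset.prod_sigma]
  refine Finset.prod_congr rfl fun I _ => ?_
  rw [Finset.prod_eq_single (fun l : {l // l ∈ I} => i l.1)]
  · simp [blk]
  · intro v _ hv
    simp [blk, hv]
  · simp

lemma prod_affine_pair {D n : ℕ} (P : Finset (Finset (Fin D))) (i i' : Fin D → Fin n)
    (x h : GIdx D n → ℝ) (ε : ℝ) :
    (∏ I ∈ P, (x (blk I i) + ε * h (blk I i))) * (∏ I ∈ P, (x (blk I i') + ε * h (blk I i')))
      = ∏ q ∈ P.sigma fun _ => Finset.univ, pairFactor i i' x ε q (h q) := by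
  rw [prod_affine_eq_sigma P i fun q => x q + ε * h q,
    prod_affine_eq_sigma P i' fun q => x q + ε * h q, ← Finset.prod_mul_distrib]
  rfl

lemma integrable_pairFactor {D n : ℕ} (i i' : Fin D → Fin n) (x : GIdx D n → ℝ) (ε : ℝ)
    (q : GIdx D n) : Integrable (pairFactor i i' x ε q) (gaussianReal 0 1) := by
  unfold pairFactor
  split_ifs
  · exact integrable_affine_sq _ _
  · simpa using integrable_affine (x q) ε
  · simpa using integrable_affine (x q) ε
  · simp

lemma integral_pairFactor {D n : ℕ} (i i' : Fin D → Fin n) (x : GIdx D n → ℝ) (ε : ℝ)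
    (q : GIdx D n) : ∫ t, pairFactor i i' x ε q t ∂gaussianReal 0 1 =
      (if q = blk q.1 i then x q else 1) * (if q = blk q.1 i' then x q else 1)
        + (if q = blk q.1 i ∧ q = blk q.1 i' then ε ^ 2 else 0) := by
  unfold pairFactor
  by_cases h1 : q = blk q.1 i <;> by_cases h2 : q = blk q.1 i'
  · simp only [if_pos h1, if_pos h2, if_pos (And.intro h1 h2)]
    exact integral_affine_sq _ _
  · simp only [if_pos h1, if_neg h2, mul_one, integral_affine]
    simp [h2]
  · simp only [if_pos h2, if_neg h1, one_mul, integral_affine]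
    simp [h1]
  · simp only [if_neg h2, if_neg h1]
    simp [h1]

lemma integrable_prod_affine_pair {D n : ℕ} (P : Finset (Finset (Fin D))) (i i' : Fin D → Fin n)
    (x : GIdx D n → ℝ) (ε : ℝ) :
    Integrable (fun h => (∏ I ∈ P, (x (blk I i) + ε * h (blk I i))) *
      (∏ I ∈ P, (x (blk I i') + ε * h (blk I i')))) (stdGaussian (GIdx D n)) := by
  simp_rw [prod_affine_pair]
  exact integrable_prod_coord _ _ fun q _ => integrable_pairFactor _ _ _ _ _

lemma integral_prod_affine_pair {D n : ℕ} (P : Finset (Finset (Fin D))) (i i' : Fin D → Fin n)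
    (x : GIdx D n → ℝ) (ε : ℝ) :
    ∫ h, (∏ I ∈ P, (x (blk I i) + ε * h (blk I i))) *
      (∏ I ∈ P, (x (blk I i') + ε * h (blk I i'))) ∂stdGaussian (GIdx D n)
      = ∏ I ∈ P, (x (blk I i) * x (blk I i') + if blk I i = blk I i' then ε ^ 2 else 0) := by
  simp_rw [prod_affine_pair]
  rw [integral_prod_coord]
  simp_rw [integral_pairFactor]
  rw [Finset.prod_sigma]
  refine Finset.prod_congr rfl fun I _ => ?_
  by_cases hI : blk I i = blk I i'
  · rw [Finset.prod_eq_single (fun l : {l // l ∈ I} => i l.1)]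
    · have : (⟨I, fun l => i l.1⟩ : GIdx D n) = blk I i := rfl
      simp [this, hI]
    · intro v _ hv
      have h2 : (⟨I, v⟩ : GIdx D n) ≠ blk I i := by simpa [blk] using hv
      have h3 : (⟨I, v⟩ : GIdx D n) ≠ blk I i' := hI ▸ h2
      simp [h2, h3]
    · simp
  · have hne : (fun l : {l // l ∈ I} => i l.1) ≠ fun l => i' l.1 := by
      intro h
      exact hI (by simp [blk, h])
    rw [if_neg hI, add_zero]
    have : ∀ v : {l // l ∈ I} → Fin n,
        ¬ ((⟨I, v⟩ : GIdx D n) = blk I i ∧ (⟨I, v⟩ : GIdx D n) = blk I i') :=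
      fun v h => hI (h.1.symm.trans h.2)
    simp only [if_neg (this _), add_zero]
    rw [Finset.prod_mul_distrib]
    have key : ∀ i : Fin D → Fin n, ∏ v : {l // l ∈ I} → Fin n,
        (if (⟨I, v⟩ : GIdx D n) = blk I i then x ⟨I, v⟩ else 1) = x (blk I i) := by
      intro i
      rw [Finset.prod_eq_single (fun l : {l // l ∈ I} => i l.1)]
      · simp [blk]
      · intro v _ hv
        simp [blk, hv]
      · simp
    rw [key, key]

/-- Replacing a set of coordinates of a standard Gaussian vector by those of an independent copy
does not change its law. -/
lemma measurePreserving_resample {κ : Type*} [Fintype κ] (S : Set κ) :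
    MeasurePreserving (fun p : (κ → ℝ) × (κ → ℝ) => fun q => if q ∈ S then p.1 q else p.2 q)
      ((stdGaussian κ).prod (stdGaussian κ)) (stdGaussian κ) := by
  have hm : Measurable (fun p : (κ → ℝ) × (κ → ℝ) => fun q => if q ∈ S then p.1 q else p.2 q) := by
    refine measurable_pi_lambda _ fun q => ?_
    by_cases hq : q ∈ S
    · simp only [if_pos hq]; fun_prop
    · simp only [if_neg hq]; fun_prop
  refine ⟨hm, ?_⟩
  symm
  refine Measure.pi_eq fun s hs => ?_
  rw [Measure.map_apply hm (MeasurableSet.univ_pi hs)]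
  have : (fun p : (κ → ℝ) × (κ → ℝ) => fun q => if q ∈ S then p.1 q else p.2 q) ⁻¹'
      (Set.univ.pi s) = (Set.univ.pi fun q => if q ∈ S then s q else Set.univ) ×ˢ
        (Set.univ.pi fun q => if q ∈ S then Set.univ else s q) := by
    ext p
    simp only [Set.mem_preimage, Set.mem_pi, Set.mem_univ, true_implies, Set.mem_prod]
    rw [← forall_and]
    refine forall_congr' fun q => ?_
    by_cases hq : q ∈ S <;> simp [hq]
  rw [this, Measure.prod_prod]
  unfold _root_.stdGaussian
  rw [Measure.pi_pi, Measure.pi_pi, ← Finset.prod_mul_distrib]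
  refine Finset.prod_congr rfl fun q _ => ?_
  by_cases hq : q ∈ S <;> simp [hq]

lemma integral_resample_two {κ : Type*} [Fintype κ] (S S' : Set κ) {F : (κ → ℝ) → ℝ}
    (hF : Integrable F (stdGaussian κ)) :
    ∫ h, ∫ g, ∫ ω, F (fun q => if q ∈ S then h q else if q ∈ S' then g q else ω q)
      ∂stdGaussian κ ∂stdGaussian κ ∂stdGaussian κ = ∫ ω, F ω ∂stdGaussian κ := by
  have h1 := measurePreserving_resample S
  have h2 := measurePreserving_resample S'
  have hid : MeasurePreserving (id : (κ → ℝ) → κ → ℝ) (stdGaussian κ) (stdGaussian κ) :=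
    MeasurePreserving.id _
  have h3 := h1.comp (hid.prod h2)
  have hF3 : Integrable (F ∘ _) _ := h3.integrable_comp_of_integrable hF
  have e := integral_map (f := F) h3.measurable.aemeasurable (by rw [h3.map_eq]; exact hF.1)
  rw [h3.map_eq] at e
  rw [e]
  refine Eq.symm ((integral_prod _ hF3).trans ?_)
  refine integral_congr_ae ?_
  filter_upwards [hF3.prod_right_ae] with h hh
  exact integral_prod _ hh

/-! ### Seminorms and infimal convolutions -/

lemma linearMap_eq_sum {ι : Type*} [Fintype ι] [DecidableEq ι] (f : (ι → ℝ) →ₗ[ℝ] ℝ) (W : ι → ℝ) :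
    f W = ∑ i, W i * f (Pi.single i 1) := by
  conv_lhs => rw [show W = ∑ i, W i • (Pi.single i 1 : ι → ℝ) by simpa using pi_eq_sum_univ' W]
  simp

lemma seminorm_le_sum {ι : Type*} [Fintype ι] [DecidableEq ι] (Φ : Seminorm ℝ (ι → ℝ)) (W : ι → ℝ) :
    Φ W ≤ ∑ i, |W i| * Φ (Pi.single i 1) := by
  have e : W = ∑ i, W i • (Pi.single i 1 : ι → ℝ) := by
    simpa using (pi_eq_sum_univ' W)
  calc Φ W = Φ (∑ i, W i • (Pi.single i 1 : ι → ℝ)) := by rw [← e]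
    _ ≤ ∑ i, Φ (W i • (Pi.single i 1 : ι → ℝ)) := Finset.le_sum_of_subadditive Φ (map_zero Φ).le (map_add_le_add Φ) _ _
    _ = _ := by simp [map_smul_eq_mul]

lemma seminorm_continuous {ι : Type*} [Fintype ι] (Φ : Seminorm ℝ (ι → ℝ)) : Continuous Φ := by
  refine Seminorm.continuous_of_continuousAt_zero ?_
  have h : Filter.Tendsto (fun W : ι → ℝ => ∑ i, |W i| * Φ (Pi.single i 1)) (nhds 0) (nhds 0) := by
    have : Continuous (fun W : ι → ℝ => ∑ i, |W i| * Φ (Pi.single i 1)) := by fun_prop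
    simpa using this.tendsto 0
  unfold ContinuousAt
  rw [map_zero]
  exact squeeze_zero (fun W => apply_nonneg Φ W) (seminorm_le_sum Φ) h

lemma seminorm_integrable {ι Ω : Type*} [Fintype ι] [MeasurableSpace Ω] {μ : Measure Ω}
    (Φ : Seminorm ℝ (ι → ℝ)) {Z : Ω → ι → ℝ} (hZ : ∀ i, Integrable (fun h => Z h i) μ) :
    Integrable (fun h => Φ (Z h)) μ := by
  have hm : AEMeasurable Z μ := aemeasurable_pi_lambda Z fun i => (hZ i).1.aemeasurable
  refine Integrable.mono' (integrable_finsetSum Finset.univ fun i _ =>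
    (hZ i).abs.mul_const (Φ (Pi.single i 1)))
    ((seminorm_continuous Φ).measurable.comp_aemeasurable hm).aestronglyMeasurable ?_
  refine Filter.Eventually.of_forall fun h => ?_
  rw [Real.norm_of_nonneg (apply_nonneg Φ _)]
  exact seminorm_le_sum Φ (Z h)

/-- Hahn–Banach: a functional dominated by `Φ` and norming at the prescribed point. -/
lemma exists_support {E : Type*} [AddCommGroup E] [Module ℝ E] (Φ : Seminorm ℝ E) (W : E) :
    ∃ f : E →ₗ[ℝ] ℝ, f W = Φ W ∧ ∀ Z, f Z ≤ Φ Z := by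
  by_cases hW : W = 0
  · exact ⟨0, by simp [hW], fun Z => by simp⟩
  obtain ⟨f, hf1, hf2⟩ := exists_extension_of_le_sublinear
    (LinearPMap.mkSpanSingleton W (Φ W) hW) Φ
    (fun c hc x => by rw [map_smul_eq_mul, Real.norm_of_nonneg hc.le])
    (fun x y => map_add_le_add Φ x y) (by
      rintro ⟨x, hx⟩
      obtain ⟨c, rfl⟩ := Submodule.mem_span_singleton.1 hx
      unfold LinearPMap.mkSpanSingleton
      rw [LinearPMap.mkSpanSingleton'_apply]
      simp only [map_smul_eq_mul, smul_eq_mul, Real.norm_eq_abs, RingHom.id_apply]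
      exact mul_le_mul_of_nonneg_right (le_abs_self c) (apply_nonneg Φ W))
  refine ⟨f, ?_, hf2⟩
  have := hf1 ⟨W, Submodule.mem_span_singleton_self W⟩
  exact this.trans (LinearPMap.mkSpanSingleton_apply ℝ ℝ hW (Φ W))

/-- The infimal convolution of `N` with the quadratic cost of property (τ). -/
noncomputable def infConv {κ : Type*} [Fintype κ] (N : (κ → ℝ) → ℝ) (g : κ → ℝ) : ℝ :=
  ⨅ y : κ → ℝ, (N y + (∑ q, (g q - y q) ^ 2) / 4)

lemma infConv_bddBelow {κ : Type*} [Fintype κ] {N : (κ → ℝ) → ℝ} (h0 : ∀ y, 0 ≤ N y)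
    (g : κ → ℝ) : BddBelow (Set.range fun y : κ → ℝ => N y + (∑ q, (g q - y q) ^ 2) / 4) := by
  refine ⟨0, ?_⟩
  rintro _ ⟨y, rfl⟩
  have := h0 y
  positivity

lemma measurable_infConv {κ Ω : Type*} [Fintype κ] [TopologicalSpace Ω] [MeasurableSpace Ω]
    [OpensMeasurableSpace Ω]
    {N : Ω → (κ → ℝ) → ℝ} {G : Ω → κ → ℝ} (hN : ∀ y, Continuous fun u => N u y)
    (hG : Continuous G) (h0 : ∀ u y, 0 ≤ N u y) :
    Measurable fun u => infConv (N u) (G u) := by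
  refine UpperSemicontinuous.measurable ?_
  refine upperSemicontinuous_ciInf (fun u => infConv_bddBelow (h0 u) (G u)) fun y => ?_
  refine Continuous.upperSemicontinuous ?_
  have := hN y
  fun_prop

lemma infConv_neg {κ : Type*} [Fintype κ] {N : (κ → ℝ) → ℝ} (hN : ∀ y, N (-y) = N y)
    (g : κ → ℝ) : infConv N (-g) = infConv N g := by
  unfold infConv
  refine (Equiv.neg (κ → ℝ)).iInf_congr fun y => ?_
  simp only [Equiv.neg_apply, hN, Pi.neg_apply]
  congr 2
  refine Finset.sum_congr rfl fun q _ => by ring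

/-- A linear minorant of `N` survives infimal convolution up to the squared norm of its
coefficients, by AM–GM in each coordinate. -/
lemma le_infConv {κ : Type*} [Fintype κ] [DecidableEq κ] {N : (κ → ℝ) → ℝ} (f : (κ → ℝ) →ₗ[ℝ] ℝ)
    (hf : ∀ y, f y ≤ N y) (g : κ → ℝ) :
    f g - ∑ q, f (Pi.single q 1) ^ 2 ≤ infConv N g := by
  refine le_ciInf fun y => ?_
  have e : f (g - y) = ∑ q, (g q - y q) * f (Pi.single q 1) := by
    simpa using linearMap_eq_sum f (g - y)
  have h1 : f g = f y + ∑ q, (g q - y q) * f (Pi.single q 1) := by rw [← e, map_sub]; ring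
  have h2 : ∑ q, (g q - y q) * f (Pi.single q 1)
      ≤ ∑ q, ((g q - y q) ^ 2 / 4 + f (Pi.single q 1) ^ 2) :=
    Finset.sum_le_sum fun q _ => by
      nlinarith [sq_nonneg ((g q - y q) / 2 - f (Pi.single q 1))]
  rw [Finset.sum_add_distrib, ← Finset.sum_div] at h2
  linarith [hf y]

/-- Property (τ) applied to the infimal convolution of `N`, combined with Jensen's inequality
`E exp (-N) ≥ exp (-E N)`. -/
lemma tau_infConv {κ : Type*} [Fintype κ] {N : (κ → ℝ) → ℝ} (hc : Continuous N)
    (h0 : ∀ y, 0 ≤ N y) (hi : Integrable N (stdGaussian κ)) :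
    ∫⁻ g, ENNReal.ofReal (Real.exp (infConv N g - ∫ y, N y ∂stdGaussian κ)) ∂stdGaussian κ
      ≤ 1 := by
  have hmeas : Measurable fun g => infConv N g :=
    measurable_infConv (N := fun _ => N) (fun y => continuous_const) continuous_id fun _ => h0
  have ht := tau_stdGaussian (F := fun g => ENNReal.ofReal (Real.exp (infConv N g)))
    (G := fun y => ENNReal.ofReal (Real.exp (-N y))) (by fun_prop) (by fun_prop) (by
      intro x y
      rw [← ENNReal.ofReal_mul (Real.exp_nonneg _), ← Real.exp_add]
      refine ENNReal.ofReal_le_ofReal (Real.exp_le_exp.2 ?_)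
      have := ciInf_le (infConv_bddBelow h0 x) y
      unfold infConv
      linarith)
  have hbound : Integrable (fun y => Real.exp (-N y)) (stdGaussian κ) := by
    refine Integrable.mono' (integrable_const 1) (by fun_prop) ?_
    refine Filter.Eventually.of_forall fun y => ?_
    rw [Real.norm_of_nonneg (Real.exp_nonneg _)]
    exact Real.exp_le_one_iff.2 (by linarith [h0 y])
  have hJ : Real.exp (-∫ y, N y ∂stdGaussian κ) ≤ ∫ y, Real.exp (-N y) ∂stdGaussian κ := by
    rw [← integral_neg]
    exact convexOn_exp.map_integral_le Real.continuous_exp.continuousOn isClosed_univ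
      (Filter.Eventually.of_forall fun _ => Set.mem_univ _) hi.neg hbound
  have hJ2 : ENNReal.ofReal (Real.exp (-∫ y, N y ∂stdGaussian κ))
      ≤ ∫⁻ y, ENNReal.ofReal (Real.exp (-N y)) ∂stdGaussian κ := by
    rw [← ofReal_integral_eq_lintegral_ofReal hbound
      (Filter.Eventually.of_forall fun _ => Real.exp_nonneg _)]
    exact ENNReal.ofReal_le_ofReal hJ
  simp_rw [sub_eq_add_neg, Real.exp_add, ENNReal.ofReal_mul (Real.exp_nonneg _)]
  rw [lintegral_mul_const _ (by fun_prop)]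
  exact (mul_le_mul_right hJ2 _).trans ht

/-- Property (τ) for a whole family of functions `N h`, averaged over `h`: a symmetric set of
measure at least `1/2` on which the average exponential of the infimal convolutions is at most
`2`. -/
lemma exists_good_set {κ Ω : Type*} [Fintype κ] [TopologicalSpace Ω] [MeasurableSpace Ω]
    [OpensMeasurableSpace Ω] [SecondCountableTopology Ω]
    {μ : Measure Ω} [IsProbabilityMeasure μ] {N : Ω → (κ → ℝ) → ℝ}
    (hc : Continuous fun p : Ω × (κ → ℝ) => N p.1 p.2) (h0 : ∀ h y, 0 ≤ N h y)
    (hi : ∀ h, Integrable (N h) (stdGaussian κ)) (hs : ∀ h y, N h (-y) = N h y) :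
    ∃ G : Set (κ → ℝ), MeasurableSet G ∧ (∀ g ∈ G, -g ∈ G) ∧ 2⁻¹ ≤ stdGaussian κ G ∧
      ∀ g ∈ G, ∫⁻ h, ENNReal.ofReal (Real.exp (infConv (N h) g - ∫ y, N h y ∂stdGaussian κ)) ∂μ
        ≤ 2 := by
  set R : (κ → ℝ) → ℝ≥0∞ := fun g =>
    ∫⁻ h, ENNReal.ofReal (Real.exp (infConv (N h) g - ∫ y, N h y ∂stdGaussian κ)) ∂μ with hR
  have m1 : Measurable fun p : (κ → ℝ) × Ω => infConv (N p.2) p.1 :=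
    measurable_infConv (N := fun p : (κ → ℝ) × Ω => N p.2) (fun y => by fun_prop) (by fun_prop)
      fun p => h0 p.2
  have m2 : Measurable fun h : Ω => ∫ y, N h y ∂stdGaussian κ :=
    (hc.stronglyMeasurable.integral_prod_right).measurable
  have m3 : Measurable fun p : (κ → ℝ) × Ω => ENNReal.ofReal (Real.exp
      (infConv (N p.2) p.1 - ∫ y, N p.2 y ∂stdGaussian κ)) := by
    have : Measurable fun p : (κ → ℝ) × Ω => ∫ y, N p.2 y ∂stdGaussian κ := m2.comp measurable_snd
    fun_prop
  have mR : Measurable R := m3.lintegral_prod_right'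
  have hRint : ∫⁻ g, R g ∂stdGaussian κ ≤ 1 := by
    rw [hR, lintegral_lintegral_swap m3.aemeasurable]
    calc _ ≤ ∫⁻ _ : Ω, 1 ∂μ := lintegral_mono fun h =>
          tau_infConv (hc.comp (by fun_prop : Continuous fun y => (h, y))) (h0 h) (hi h)
      _ = 1 := by simp
  refine ⟨{g | R g ≤ 2}, measurableSet_le mR measurable_const, ?_, ?_, fun g hg => hg⟩
  · intro g hg
    simp only [Set.mem_ofPred_eq, hR] at hg ⊢
    simpa only [infConv_neg (hs _)] using hg
  · have h1 : 2 * stdGaussian κ {g | 2 ≤ R g} ≤ 1 :=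
      (mul_meas_ge_le_lintegral mR 2).trans hRint
    have h2 : stdGaussian κ {g | 2 ≤ R g} ≤ 2⁻¹ := by
      rw [ENNReal.le_inv_iff_mul_le, mul_comm]; exact h1
    have h3 : (1 : ℝ≥0∞) ≤ stdGaussian κ {g | R g ≤ 2} + stdGaussian κ {g | 2 ≤ R g} := by
      rw [← measure_univ (μ := stdGaussian κ)]
      refine (measure_mono ?_).trans (measure_union_le _ _)
      intro g _
      exact le_total (R g) 2
    have h4 : (2⁻¹ : ℝ≥0∞) + 2⁻¹ ≤ stdGaussian κ {g | R g ≤ 2} + 2⁻¹ := by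
      rw [ENNReal.inv_two_add_inv_two]
      exact h3.trans (by gcongr)
    exact (ENNReal.add_le_add_iff_right (by simp)).1 h4

/-! ### Weight arrays and their first two Gaussian moments -/

/-- The weight array `y_{i_{j0}} ∏_{I ∈ P} u_{i_I}`. -/
noncomputable def weight {D n : ℕ} (j0 : Fin D) (P : Finset (Finset (Fin D)))
    (y u : GIdx D n → ℝ) : (Fin D → Fin n) → ℝ :=
  fun i => y (blk {j0} i) * ∏ I ∈ P, u (blk I i)

/-- The restrictions of `x` to the blocks of `P` lie in the Euclidean unit balls. -/
def UnitOn {D n : ℕ} (P : Finset (Finset (Fin D))) (x : GIdx D n → ℝ) : Prop :=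
  ∀ I ∈ P, ∑ v : {l // l ∈ I} → Fin n, x ⟨I, v⟩ ^ 2 ≤ 1

lemma weight_add {D n : ℕ} (j0 : Fin D) (P : Finset (Finset (Fin D))) (y y' u : GIdx D n → ℝ) :
    weight j0 P (y + y') u = weight j0 P y u + weight j0 P y' u := by
  ext i; simp [weight, add_mul]

lemma weight_smul {D n : ℕ} (j0 : Fin D) (P : Finset (Finset (Fin D))) (c : ℝ)
    (y u : GIdx D n → ℝ) : weight j0 P (c • y) u = c • weight j0 P y u := by
  ext i; simp [weight, mul_assoc]

lemma weight_neg {D n : ℕ} (j0 : Fin D) (P : Finset (Finset (Fin D))) (y u : GIdx D n → ℝ) :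
    weight j0 P (-y) u = - weight j0 P y u := by
  ext i; simp [weight]

lemma weight_continuous {D n : ℕ} (j0 : Fin D) (P : Finset (Finset (Fin D))) :
    Continuous fun p : (GIdx D n → ℝ) × (GIdx D n → ℝ) => weight j0 P p.2 p.1 := by
  unfold weight
  fun_prop

section quad

variable {D n : ℕ} {j0 : Fin D} {P : Finset (Finset (Fin D))}
  {Φ : Seminorm ℝ ((Fin D → Fin n) → ℝ)} {ε S : ℝ}

/-- The first hypothesis on `Φ`: all tensors with one free factor on the merged block
`{j0} ∪ ⋃ Q` are controlled. -/
def HypTensor (j0 : Fin D) (P : Finset (Finset (Fin D)))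
    (Φ : Seminorm ℝ ((Fin D → Fin n) → ℝ)) (ε S : ℝ) : Prop :=
  ∀ Q ⊆ P, ∀ x : GIdx D n → ℝ, UnitOn P x →
    ∀ z : ({l // l ∈ insert j0 (Q.sup id)} → Fin n) → ℝ, ∑ v, z v ^ 2 ≤ 1 →
      ε ^ Q.card * Φ (fun i => z (fun l => i l.1) * ∏ I ∈ P \ Q, x (blk I i)) ≤ S

/-- The second hypothesis on `Φ`: Gaussian averages over `{j0}` and the blocks of `Q` are
controlled. -/
def HypGauss (j0 : Fin D) (P : Finset (Finset (Fin D)))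
    (Φ : Seminorm ℝ ((Fin D → Fin n) → ℝ)) (ε S : ℝ) : Prop :=
  ∀ Q ⊆ P, ∀ x : GIdx D n → ℝ, UnitOn P x →
    ε ^ (Q.card + 1) * ∫ h, ∫ g, Φ (fun i => g (blk {j0} i) *
      ((∏ I ∈ Q, h (blk I i)) * ∏ I ∈ P \ Q, x (blk I i)))
      ∂stdGaussian (GIdx D n) ∂stdGaussian (GIdx D n) ≤ S

lemma quad_bound (hε : 0 < ε) (H1 : HypTensor j0 P Φ ε S)
    {Q : Finset (Finset (Fin D))} (hQ : Q ⊆ P) {x : GIdx D n → ℝ} (hx : UnitOn P x)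
    (f : ((Fin D → Fin n) → ℝ) →ₗ[ℝ] ℝ) (hf : ∀ Z, f Z ≤ Φ Z) :
    (ε ^ 2) ^ Q.card * ∑ i, ∑ i', (if ∀ l ∈ insert j0 (Q.sup id), i l = i' l then
      (f (Pi.single i 1) * ∏ I ∈ P \ Q, x (blk I i)) *
        (f (Pi.single i' 1) * ∏ I ∈ P \ Q, x (blk I i')) else 0) ≤ S ^ 2 := by
  set U := insert j0 (Q.sup id) with hU
  set c : (Fin D → Fin n) → ℝ := fun i => f (Pi.single i 1) * ∏ I ∈ P \ Q, x (blk I i) with hc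
  let z : ({l // l ∈ U} → Fin n) → ℝ := fun v => ∑ i, if (fun l => i l.1) = v then c i else 0
  set Z := ∑ v, z v ^ 2 with hZ
  have hZ0 : 0 ≤ Z := Finset.sum_nonneg fun v _ => sq_nonneg _
  have e1 : ∑ i, ∑ i', (if ∀ l ∈ U, i l = i' l then c i * c i' else 0)
      = ∑ i, c i * z (fun l => i l.1) := by
    refine Finset.sum_congr rfl fun i _ => ?_
    simp only [z, Finset.mul_sum]
    refine Finset.sum_congr rfl fun i' _ => ?_
    have : (∀ l ∈ U, i l = i' l) ↔ (fun l : {l // l ∈ U} => i' l.1) = fun l => i l.1 := by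
      constructor
      · intro h; funext l; exact (h l.1 l.2).symm
      · intro h l hl; exact (congrFun h ⟨l, hl⟩).symm
    simp only [this]
    split_ifs <;> simp
  have e2 : ∑ i, c i * z (fun l => i l.1) = Z := by
    have : ∀ i, c i * z (fun l => i l.1) = ∑ v, (if (fun l => i l.1) = v then c i else 0) * z v := by
      intro i
      simp [ite_mul]
    simp_rw [this]
    rw [Finset.sum_comm, hZ]
    refine Finset.sum_congr rfl fun v _ => ?_
    rw [← Finset.sum_mul, sq]
  have e3 : ∀ r : ℝ, f (fun i => (r * z (fun l => i l.1)) * ∏ I ∈ P \ Q, x (blk I i)) = r * Z := by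
    intro r
    rw [linearMap_eq_sum, ← e2, Finset.mul_sum]
    refine Finset.sum_congr rfl fun i _ => ?_
    simp only [hc]; ring
  rw [e1, e2]
  rcases hZ0.eq_or_lt with h0 | h0
  · rw [← h0, mul_zero]; positivity
  · have hs : 0 < Real.sqrt Z := Real.sqrt_pos.2 h0
    have h1 := H1 Q hQ x hx (fun v => (Real.sqrt Z)⁻¹ * z v) (by
      simp_rw [mul_pow]
      rw [← Finset.mul_sum, ← hZ, inv_pow, Real.sq_sqrt hZ0, inv_mul_cancel₀ h0.ne'])
    have h2 : ε ^ Q.card * Real.sqrt Z ≤ S := by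
      refine le_trans ?_ h1
      refine mul_le_mul_of_nonneg_left ?_ (by positivity)
      refine le_trans (le_of_eq ?_) (hf _)
      rw [e3]
      field_simp
      exact Real.sq_sqrt hZ0
    calc (ε ^ 2) ^ Q.card * Z = (ε ^ Q.card * Real.sqrt Z) ^ 2 := by
          rw [mul_pow, Real.sq_sqrt hZ0, ← pow_mul, ← pow_mul, mul_comm 2]
      _ ≤ S ^ 2 := 
          pow_le_pow_left₀ (mul_nonneg (pow_nonneg hε.le _) hs.le) h2 2

lemma sum_sq_weight (f : ((Fin D → Fin n) → ℝ) →ₗ[ℝ] ℝ) (u : GIdx D n → ℝ) :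
    ∑ q, f (weight j0 P (Pi.single q 1) u) ^ 2 = ∑ i, ∑ i', (if i j0 = i' j0 then
      f (Pi.single i 1) * f (Pi.single i' 1) else 0) *
        ((∏ I ∈ P, u (blk I i)) * (∏ I ∈ P, u (blk I i'))) := by
  have e : ∀ q, f (weight j0 P (Pi.single q 1) u) ^ 2 = ∑ i, ∑ i',
      ((Pi.single q 1 : GIdx D n → ℝ) (blk {j0} i) * (Pi.single q 1 : GIdx D n → ℝ) (blk {j0} i'))
        * ((f (Pi.single i 1) * f (Pi.single i' 1)) *
        ((∏ I ∈ P, u (blk I i)) * (∏ I ∈ P, u (blk I i')))) := by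
    intro q
    rw [linearMap_eq_sum, sq, Finset.sum_mul_sum]
    refine Finset.sum_congr rfl fun i _ => Finset.sum_congr rfl fun i' _ => ?_
    simp only [weight]; ring
  simp_rw [e]
  rw [Finset.sum_comm]
  refine Finset.sum_congr rfl fun i _ => ?_
  rw [Finset.sum_comm]
  refine Finset.sum_congr rfl fun i' _ => ?_
  rw [← Finset.sum_mul]
  have h : ∑ q, (Pi.single q 1 : GIdx D n → ℝ) (blk {j0} i) *
      (Pi.single q 1 : GIdx D n → ℝ) (blk {j0} i') = if i j0 = i' j0 then 1 else 0 := by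
    rw [Finset.sum_eq_single (blk {j0} i)]
    · have := blk_eq_iff (I := {j0}) (i := i') (i' := i)
      simp only [Finset.mem_singleton, forall_eq] at this
      simp [Pi.single_apply, this, eq_comm]
    · intro q _ hq
      simp [Pi.single_apply, Ne.symm hq]
    · simp
  rw [h]
  split_ifs <;> simp

lemma second_moment_integrable (f : ((Fin D → Fin n) → ℝ) →ₗ[ℝ] ℝ) (x : GIdx D n → ℝ) :
    Integrable (fun h : GIdx D n → ℝ =>
      ∑ q, f (weight j0 P (Pi.single q 1) (fun b => x b + ε * h b)) ^ 2)
      (stdGaussian (GIdx D n)) := by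
  simp_rw [sum_sq_weight]
  exact integrable_finsetSum _ fun i _ => integrable_finsetSum _ fun i' _ =>
    (integrable_prod_affine_pair P i i' x ε).const_mul _

/-- The second moment of the shifted polynomial chaos splits orthogonally over the subsets of
`P`. -/
lemma second_moment_bound (hε : 0 < ε) (H1 : HypTensor j0 P Φ ε S)
    {x : GIdx D n → ℝ} (hx : UnitOn P x)
    (f : ((Fin D → Fin n) → ℝ) →ₗ[ℝ] ℝ) (hf : ∀ Z, f Z ≤ Φ Z) :
    ∫ h, ∑ q, f (weight j0 P (Pi.single q 1) (fun b => x b + ε * h b)) ^ 2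
      ∂stdGaussian (GIdx D n) ≤ 2 ^ P.card * S ^ 2 := by
  simp_rw [sum_sq_weight]
  rw [integral_finsetSum _ fun i _ => integrable_finsetSum _ fun i' _ =>
    (integrable_prod_affine_pair P i i' x ε).const_mul _]
  simp_rw [fun i => integral_finsetSum (μ := stdGaussian (GIdx D n)) Finset.univ
    fun i' _ => (integrable_prod_affine_pair P i i' x ε).const_mul
      (if i j0 = i' j0 then f (Pi.single i 1) * f (Pi.single i' 1) else 0), integral_const_mul,
    integral_prod_affine_pair]
  have e : ∀ i i' : Fin D → Fin n, (if i j0 = i' j0 then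
      f (Pi.single i 1) * f (Pi.single i' 1) else 0) *
        ∏ I ∈ P, (x (blk I i) * x (blk I i') + if blk I i = blk I i' then ε ^ 2 else 0)
      = ∑ Q ∈ P.powerset, (ε ^ 2) ^ Q.card *
        (if ∀ l ∈ insert j0 (Q.sup id), i l = i' l then
      (f (Pi.single i 1) * ∏ I ∈ P \ Q, x (blk I i)) *
        (f (Pi.single i' 1) * ∏ I ∈ P \ Q, x (blk I i')) else 0) := by
    intro i i'
    simp_rw [add_comm (x (blk _ i) * x (blk _ i'))]
    rw [Finset.prod_add, Finset.mul_sum]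
    refine Finset.sum_congr rfl fun Q _ => ?_
    have h1 : ∏ I ∈ Q, (if blk I i = blk I i' then ε ^ 2 else 0)
        = if ∀ I ∈ Q, blk I i = blk I i' then (ε ^ 2) ^ Q.card else 0 := by
      split_ifs with h
      · rw [Finset.prod_congr rfl fun I hI => if_pos (h I hI), Finset.prod_const]
      · push Not at h
        obtain ⟨I, hI, hI'⟩ := h
        exact Finset.prod_eq_zero hI (if_neg hI')
    have h2 : (∀ l ∈ insert j0 (Q.sup id), i l = i' l) ↔
        i j0 = i' j0 ∧ ∀ I ∈ Q, blk I i = blk I i' := by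
      simp only [Finset.mem_insert, forall_eq_or_imp, Finset.mem_sup, id, blk_eq_iff]
      constructor
      · exact fun h => ⟨h.1, fun I hI l hl => h.2 l ⟨I, hI, hl⟩⟩
      · exact fun h => ⟨h.1, fun l ⟨I, hI, hl⟩ => h.2 I hI l hl⟩
    rw [h1]
    simp only [h2]
    rw [Finset.prod_mul_distrib]
    by_cases ha : i j0 = i' j0 <;> by_cases hb : ∀ I ∈ Q, blk I i = blk I i'
    · rw [if_pos ha, if_pos hb, if_pos ⟨ha, hb⟩]; ring
    · rw [if_neg hb, if_neg fun h : _ ∧ _ => hb h.2]; ring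
    · rw [if_neg ha, if_neg fun h : _ ∧ _ => ha h.1]; ring
    · rw [if_neg ha, if_neg fun h : _ ∧ _ => ha h.1]; ring
  simp_rw [e]
  rw [Finset.sum_congr rfl fun i _ => Finset.sum_comm, Finset.sum_comm]
  calc _ ≤ ∑ Q ∈ P.powerset, S ^ 2 := Finset.sum_le_sum fun Q hQ => by
        simp_rw [← Finset.mul_sum]
        exact quad_bound hε H1 (Finset.mem_powerset.1 hQ) hx f hf
    _ = _ := by simp

lemma weight_expand (g x h : GIdx D n → ℝ) :
    weight j0 P g (fun b => x b + ε * h b) = ∑ Q ∈ P.powerset, ε ^ Q.card • (fun i =>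
      g (blk {j0} i) * ((∏ I ∈ Q, h (blk I i)) * ∏ I ∈ P \ Q, x (blk I i))) := by
  ext i
  simp only [weight, Finset.sum_apply, Pi.smul_apply, smul_eq_mul]
  simp_rw [add_comm (x _)]
  rw [Finset.prod_add, Finset.mul_sum]
  refine Finset.sum_congr rfl fun Q _ => ?_
  rw [Finset.prod_mul_distrib, Finset.prod_const]
  ring

lemma integrable_blk_coord (b : GIdx D n) :
    Integrable (fun g : GIdx D n → ℝ => g b) (stdGaussian (GIdx D n)) := by
  simpa using integrable_prod_coord {b} (fun _ t => t) fun _ _ => integrable_id_gauss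

lemma integrable_weight (Φ : Seminorm ℝ ((Fin D → Fin n) → ℝ)) (u : GIdx D n → ℝ) :
    Integrable (fun g => Φ (weight j0 P g u)) (stdGaussian (GIdx D n)) :=
  seminorm_integrable Φ fun i => (integrable_blk_coord (blk {j0} i)).mul_const _

lemma integrable_mean (Φ : Seminorm ℝ ((Fin D → Fin n) → ℝ)) (x : GIdx D n → ℝ) (ε : ℝ) :
    Integrable (fun h => ∫ g, Φ (weight j0 P g (fun b => x b + ε * h b))
      ∂stdGaussian (GIdx D n)) (stdGaussian (GIdx D n)) := by
  have : Integrable (fun p : (GIdx D n → ℝ) × (GIdx D n → ℝ) =>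
      Φ (weight j0 P p.2 (fun b => x b + ε * p.1 b)))
      ((stdGaussian (GIdx D n)).prod (stdGaussian (GIdx D n))) := by
    refine seminorm_integrable Φ fun i => ?_
    refine ((integrable_prod_affine P i x ε).mul_prod (integrable_blk_coord (blk {j0} i))).congr ?_
    exact Filter.Eventually.of_forall fun p => mul_comm _ _
  exact this.integral_prod_left

/-- Expand the product over `P` and bound each of the `2 ^ |P|` terms by the Gaussian hypothesis. -/
lemma mean_bound (hε : 0 < ε) (H2 : HypGauss j0 P Φ ε S) {x : GIdx D n → ℝ} (hx : UnitOn P x) :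
    ∫ h, ∫ g, Φ (weight j0 P g (fun b => x b + ε * h b)) ∂stdGaussian (GIdx D n)
      ∂stdGaussian (GIdx D n) ≤ 2 ^ P.card * (S / ε) := by
  set w : Finset (Finset (Fin D)) → (GIdx D n → ℝ) → (GIdx D n → ℝ) → ℝ := fun Q h g =>
    ε ^ Q.card * Φ (fun i => g (blk {j0} i) *
      ((∏ I ∈ Q, h (blk I i)) * ∏ I ∈ P \ Q, x (blk I i))) with hw
  have hle : ∀ g h, Φ (weight j0 P g (fun b => x b + ε * h b)) ≤ ∑ Q ∈ P.powerset, w Q h g := by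
    intro g h
    rw [weight_expand]
    refine (Finset.le_sum_of_subadditive Φ (map_zero Φ).le (map_add_le_add Φ) _ _).trans ?_
    refine Finset.sum_le_sum fun Q _ => ?_
    rw [map_smul_eq_mul, Real.norm_of_nonneg (by positivity)]
  have i1 : ∀ Q h, Integrable (w Q h) (stdGaussian (GIdx D n)) := fun Q h =>
    (seminorm_integrable Φ fun i => (integrable_blk_coord (blk {j0} i)).mul_const _).const_mul _
  have i2 : ∀ Q, Integrable (fun h => ∫ g, w Q h g ∂stdGaussian (GIdx D n))
      (stdGaussian (GIdx D n)) := by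
    intro Q
    have : Integrable (fun p : (GIdx D n → ℝ) × (GIdx D n → ℝ) => w Q p.1 p.2)
        ((stdGaussian (GIdx D n)).prod (stdGaussian (GIdx D n))) := by
      refine (seminorm_integrable Φ fun i => ?_).const_mul _
      refine (((integrable_prod_blk Q i).mul_const (∏ I ∈ P \ Q, x (blk I i))).mul_prod
        (integrable_blk_coord (blk {j0} i))).congr ?_
      exact Filter.Eventually.of_forall fun p => mul_comm _ _
    exact this.integral_prod_left
  calc _ ≤ ∫ h, ∑ Q ∈ P.powerset, ∫ g, w Q h g ∂stdGaussian (GIdx D n)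
        ∂stdGaussian (GIdx D n) := by
        refine integral_mono (integrable_mean Φ x ε) (integrable_finsetSum _ fun Q _ => i2 Q) ?_
        intro h
        dsimp only
        rw [← integral_finsetSum _ fun Q _ => i1 Q h]
        exact integral_mono (integrable_weight Φ _) (integrable_finsetSum _ fun Q _ => i1 Q h)
          fun g => hle g h
    _ = ∑ Q ∈ P.powerset, ∫ h, ∫ g, w Q h g ∂stdGaussian (GIdx D n)
        ∂stdGaussian (GIdx D n) := integral_finsetSum _ fun Q _ => i2 Q
    _ ≤ ∑ Q ∈ P.powerset, S / ε := by
        refine Finset.sum_le_sum fun Q hQ => ?_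
        have := H2 Q (Finset.mem_powerset.1 hQ) x hx
        simp only [hw, integral_const_mul]
        rw [le_div_iff₀ hε]
        rw [pow_succ] at this
        linarith
    _ = _ := by simp

end quad

/-! ### A large set on which the seminorm is uniformly small -/

lemma exp_integral_le {Ω : Type*} [MeasurableSpace Ω] {μ : Measure Ω} [IsProbabilityMeasure μ]
    {G : Ω → ℝ} (hG : Integrable G μ)
    (h : ∫⁻ ω, ENNReal.ofReal (Real.exp (G ω)) ∂μ ≤ 2) : ∫ ω, G ω ∂μ ≤ Real.log 2 := by
  have hm : AEStronglyMeasurable (fun ω => Real.exp (G ω)) μ :=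
    Real.continuous_exp.comp_aestronglyMeasurable hG.1
  have hi : Integrable (fun ω => Real.exp (G ω)) μ := by
    refine ⟨hm, ?_⟩
    rw [hasFiniteIntegral_iff_ofReal (Filter.Eventually.of_forall fun _ => Real.exp_nonneg _)]
    exact h.trans_lt (by simp)
  have hJ : Real.exp (∫ ω, G ω ∂μ) ≤ ∫ ω, Real.exp (G ω) ∂μ :=
    convexOn_exp.map_integral_le Real.continuous_exp.continuousOn isClosed_univ
      (Filter.Eventually.of_forall fun _ => Set.mem_univ _) hG hi
  rw [← ofReal_integral_eq_lintegral_ofReal hi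
    (Filter.Eventually.of_forall fun _ => Real.exp_nonneg _)] at h
  have h2 : ∫ ω, Real.exp (G ω) ∂μ ≤ 2 := by
    have := ENNReal.ofReal_le_iff_le_toReal (by simp : (2 : ℝ≥0∞) ≠ ∞) |>.1 h
    simpa using this
  exact (Real.le_log_iff_exp_le (by norm_num)).2 (hJ.trans h2)

section core

variable {D n : ℕ} {j0 : Fin D} {P : Finset (Finset (Fin D))}
  {Φ : Seminorm ℝ ((Fin D → Fin n) → ℝ)} {ε S : ℝ}

/-- `y ↦ lam * f (weight j0 P y u)` as a linear functional. -/
noncomputable def weightFunctional (j0 : Fin D) (P : Finset (Finset (Fin D))) (lam : ℝ)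
    (f : ((Fin D → Fin n) → ℝ) →ₗ[ℝ] ℝ) (u : GIdx D n → ℝ) : (GIdx D n → ℝ) →ₗ[ℝ] ℝ where
  toFun y := lam * f (weight j0 P y u)
  map_add' y y' := by rw [weight_add, map_add, mul_add]
  map_smul' c y := by rw [weight_smul, map_smul]; simp; ring

lemma sum_sq_le_card {x : GIdx D n → ℝ} (hx : UnitOn P x) (hx0 : ∀ I ∉ P, ∀ v, x ⟨I, v⟩ = 0) :
    ∑ q, x q ^ 2 ≤ P.card := by
  rw [Fintype.sum_sigma]
  calc ∑ I : Finset (Fin D), ∑ v, x ⟨I, v⟩ ^ 2 = ∑ I ∈ P, ∑ v, x ⟨I, v⟩ ^ 2 := by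
        symm
        refine Finset.sum_subset (Finset.subset_univ P) fun I _ hI => ?_
        exact Finset.sum_eq_zero fun v _ => by rw [hx0 I hI v]; simp
    _ ≤ ∑ I ∈ P, 1 := Finset.sum_le_sum hx
    _ = _ := by simp

/-- Change of measure by `x / ε` followed by Jensen's inequality: a bound for the average
exponential of the infimal convolutions yields a bound for `Φ (weight j0 P g x)`
simultaneously for all `x`. -/
lemma core_bound (hε : 0 < ε) (hε1 : ε ≤ 1) (hS : 0 < S) (H1 : HypTensor j0 P Φ ε S)
    (H2 : HypGauss j0 P Φ ε S) {g : GIdx D n → ℝ}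
    (hg : ∫⁻ h, ENNReal.ofReal (Real.exp
      (infConv (fun y => (ε * S)⁻¹ * Φ (weight j0 P y (ε • h))) g
        - ∫ y, (ε * S)⁻¹ * Φ (weight j0 P y (ε • h)) ∂stdGaussian (GIdx D n)))
        ∂stdGaussian (GIdx D n) ≤ 2)
    {x : GIdx D n → ℝ} (hx : UnitOn P x) (hx0 : ∀ I ∉ P, ∀ v, x ⟨I, v⟩ = 0) :
    Φ (weight j0 P g x) ≤ (2 * 2 ^ P.card + P.card + 1) * (S / ε) := by
  obtain ⟨f, hfx, hf⟩ := exists_support Φ (weight j0 P g x)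
  set lam : ℝ := (ε * S)⁻¹ with hlam
  have hlam0 : 0 < lam := by positivity
  set γ := stdGaussian (GIdx D n) with hγ
  set m : (GIdx D n → ℝ) → ℝ := fun u => ∫ y, Φ (weight j0 P y u) ∂γ with hm
  set q2 : (GIdx D n → ℝ) → ℝ := fun u => ∑ q, f (weight j0 P (Pi.single q 1) u) ^ 2 with hq2
  set L : (GIdx D n → ℝ) → ℝ := fun u => lam * f (weight j0 P g u) - lam ^ 2 * q2 u - lam * m u
    with hL
  have hfc : Continuous f := f.continuous_of_finiteDimensional
  have mm : Measurable m := by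
    have : Continuous fun p : (GIdx D n → ℝ) × (GIdx D n → ℝ) => Φ (weight j0 P p.2 p.1) :=
      (seminorm_continuous Φ).comp (weight_continuous j0 P)
    exact (this.stronglyMeasurable.integral_prod_right).measurable
  have cw : ∀ y, Continuous fun u : GIdx D n → ℝ => weight j0 P y u := fun y =>
    (weight_continuous j0 P).comp (by fun_prop : Continuous fun u => (u, y))
  have mL : Measurable L := by
    have h1 : Measurable fun u => f (weight j0 P g u) := (hfc.comp (cw g)).measurable
    have h2 : Measurable q2 := by
      have : ∀ q, Continuous fun u => f (weight j0 P (Pi.single q 1) u) := fun q =>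
        hfc.comp (cw _)
      exact (by fun_prop : Continuous q2).measurable
    exact ((h1.const_mul _).sub (h2.const_mul _)).sub (mm.const_mul _)
  have hle : ∀ h : GIdx D n → ℝ, L (ε • h) ≤
      infConv (fun y => lam * Φ (weight j0 P y (ε • h))) g
        - ∫ y, lam * Φ (weight j0 P y (ε • h)) ∂γ := by
    intro h
    have := le_infConv (N := fun y => lam * Φ (weight j0 P y (ε • h)))
      (weightFunctional j0 P lam f (ε • h))
      (fun y => mul_le_mul_of_nonneg_left (hf _) hlam0.le) g
    rw [integral_const_mul]
    simp only [weightFunctional, LinearMap.coe_mk, AddHom.coe_mk, mul_pow] at this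
    rw [← Finset.mul_sum] at this
    simp only [hL, hm, hq2]
    linarith
  have h1 : ∫⁻ h, ENNReal.ofReal (Real.exp (L (ε • h))) ∂γ ≤ 2 :=
    (lintegral_mono fun h => ENNReal.ofReal_le_ofReal (Real.exp_le_exp.2 (hle h))).trans hg
  set a : GIdx D n → ℝ := ε⁻¹ • x with ha
  rw [hγ, cameron_martin a (by fun_prop)] at h1
  have hsh : ∀ h : GIdx D n → ℝ, ε • (h + a) = fun b => x b + ε * h b := by
    intro h
    ext b
    simp only [ha, Pi.smul_apply, Pi.add_apply, smul_eq_mul]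
    field_simp
    ring
  simp_rw [← ENNReal.ofReal_mul (Real.exp_nonneg _), ← Real.exp_add, hsh] at h1
  have i1 : Integrable (fun h : GIdx D n → ℝ => ∑ b, a b * h b) γ :=
    integrable_finsetSum _ fun b _ => (integrable_blk_coord b).const_mul _
  have e1 : ∫ h : GIdx D n → ℝ, ∑ b, a b * h b ∂γ = 0 := by
    rw [integral_finsetSum _ fun b _ => (integrable_blk_coord b).const_mul _]
    refine Finset.sum_eq_zero fun b _ => ?_
    rw [integral_const_mul]
    have := integral_prod_coord {b} (fun _ t => t)
    simp only [Finset.prod_singleton, integral_id_gaussianReal] at this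
    rw [this, mul_zero]
  have ff : ∀ h : GIdx D n → ℝ, f (weight j0 P g (fun b => x b + ε * h b))
      = ∑ i, (g (blk {j0} i) * f (Pi.single i 1)) *
        ∏ I ∈ P, (x (blk I i) + ε * h (blk I i)) := by
    intro h
    rw [linearMap_eq_sum]
    refine Finset.sum_congr rfl fun i _ => ?_
    simp only [weight]; ring
  have i2 : Integrable (fun h : GIdx D n → ℝ => f (weight j0 P g (fun b => x b + ε * h b))) γ := by
    simp_rw [ff]
    exact integrable_finsetSum _ fun i _ => (integrable_prod_affine P i x ε).const_mul _
  have e2 : ∫ h : GIdx D n → ℝ, f (weight j0 P g (fun b => x b + ε * h b)) ∂γ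
      = Φ (weight j0 P g x) := by
    simp_rw [ff]
    rw [integral_finsetSum _ fun i _ => (integrable_prod_affine P i x ε).const_mul _]
    have hp : ∀ i, ∫ h : GIdx D n → ℝ, ∏ I ∈ P, (x (blk I i) + ε * h (blk I i)) ∂γ
        = ∏ I ∈ P, x (blk I i) := fun i => integral_prod_affine P i x ε
    rw [← hfx, linearMap_eq_sum]
    refine Finset.sum_congr rfl fun i _ => ?_
    rw [integral_const_mul]
    refine (congrArg _ (hp i)).trans ?_
    simp only [weight]; ring
  have i3 : Integrable (fun h : GIdx D n → ℝ => q2 (fun b => x b + ε * h b)) γ :=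
    second_moment_integrable f x
  have e3 := second_moment_bound hε H1 hx f hf
  have i4 : Integrable (fun h : GIdx D n → ℝ => m (fun b => x b + ε * h b)) γ :=
    integrable_mean Φ x ε
  have e4 := mean_bound hε H2 hx
  have i5 : Integrable (fun h : GIdx D n → ℝ => L (fun b => x b + ε * h b)) γ :=
    ((i2.const_mul _).sub (i3.const_mul _)).sub (i4.const_mul _)
  have e5 : ∫ h : GIdx D n → ℝ, L (fun b => x b + ε * h b) ∂γ = lam * Φ (weight j0 P g x)
      - lam ^ 2 * ∫ h : GIdx D n → ℝ, q2 (fun b => x b + ε * h b) ∂γ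
      - lam * ∫ h : GIdx D n → ℝ, m (fun b => x b + ε * h b) ∂γ := by
    simp only [hL]
    rw [integral_sub (by exact (i2.const_mul lam).sub (i3.const_mul (lam ^ 2))) (i4.const_mul _),
      integral_sub (i2.const_mul _) (i3.const_mul _), integral_const_mul, integral_const_mul,
      integral_const_mul, e2]
  have i6 : Integrable (fun h : GIdx D n → ℝ => -(∑ b, a b * h b) - (∑ b, a b ^ 2) / 2) γ :=
    i1.neg.sub (integrable_const _)
  have h2 := exp_integral_le (i6.add i5) h1
  simp only [Pi.add_apply] at h2
  rw [integral_add i6 i5, integral_sub (by exact i1.neg) (integrable_const _), integral_neg, e1, e5] at h2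
  have h3 : ∑ b, a b ^ 2 ≤ P.card / ε ^ 2 := by
    simp only [ha, Pi.smul_apply, smul_eq_mul, mul_pow]
    rw [← Finset.mul_sum, inv_pow, div_eq_inv_mul]
    exact mul_le_mul_of_nonneg_left (sum_sq_le_card hx hx0) (by positivity)
  simp only [integral_const, smul_eq_mul, probReal_univ, one_mul, neg_zero, zero_sub] at h2
  have h4 : lam * Φ (weight j0 P g x) ≤ lam ^ 2 * (2 ^ P.card * S ^ 2)
      + lam * (2 ^ P.card * (S / ε)) + P.card / ε ^ 2 + 1 := by
    have k1 := mul_le_mul_of_nonneg_left e3 (by positivity : 0 ≤ lam ^ 2)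
    have k2 := mul_le_mul_of_nonneg_left e4 hlam0.le
    have k3 : Real.log 2 ≤ 1 := by linarith [Real.log_two_lt_d9]
    have k4 : (0 : ℝ) ≤ P.card / ε ^ 2 := by positivity
    simp only [hq2, hm] at h2
    linarith
  have h5 : Φ (weight j0 P g x) ≤ (ε * S) * (lam ^ 2 * (2 ^ P.card * S ^ 2)
      + lam * (2 ^ P.card * (S / ε)) + P.card / ε ^ 2 + 1) := by
    have := mul_le_mul_of_nonneg_left h4 (by positivity : 0 ≤ ε * S)
    rwa [← mul_assoc, hlam, mul_inv_cancel₀ (by positivity), one_mul] at this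
  refine h5.trans ?_
  have k5 : ε * S ≤ S / ε := by
    rw [le_div_iff₀ hε]
    nlinarith [mul_le_mul hε1 hε1 hε.le (by norm_num)]
  calc _ = (2 * 2 ^ P.card + P.card) * (S / ε) + ε * S := by
        rw [hlam]; field_simp; ring
    _ ≤ _ := by linarith

/-- A symmetric set of Gaussian measure at least `1/2` on which `Φ (weight j0 P g x)` is
controlled uniformly in `x`. -/
lemma exists_core_set (hε : 0 < ε) (hε1 : ε ≤ 1) (hS : 0 < S) (H1 : HypTensor j0 P Φ ε S)
    (H2 : HypGauss j0 P Φ ε S) :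
    ∃ G : Set (GIdx D n → ℝ), MeasurableSet G ∧ (∀ g ∈ G, -g ∈ G) ∧
      2⁻¹ ≤ stdGaussian (GIdx D n) G ∧ ∀ g ∈ G, ∀ x : GIdx D n → ℝ, UnitOn P x →
        Φ (weight j0 P g x) ≤ (2 * 2 ^ P.card + P.card + 1) * (S / ε) := by
  have hΦ : Continuous Φ := seminorm_continuous Φ
  obtain ⟨G, hG1, hG2, hG3, hG4⟩ := exists_good_set (μ := stdGaussian (GIdx D n))
    (N := fun h y => (ε * S)⁻¹ * Φ (weight j0 P y (ε • h)))
    (continuous_const.mul (hΦ.comp ((weight_continuous j0 P).comp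
      (by fun_prop : Continuous fun p : (GIdx D n → ℝ) × (GIdx D n → ℝ) => (ε • p.1, p.2)))))
    (fun h y => mul_nonneg (by positivity) (apply_nonneg Φ _))
    (fun h => (integrable_weight Φ _).const_mul _)
    (fun h y => by rw [weight_neg, map_neg_eq_map])
  refine ⟨G, hG1, hG2, hG3, fun g hg x hx => ?_⟩
  let x' : GIdx D n → ℝ := fun q => if q.1 ∈ P then x q else 0
  have e : weight j0 P g x = weight j0 P g x' := by
    ext i
    simp only [weight]
    congr 1
    exact Finset.prod_congr rfl fun I hI => by simp [x', blk, hI]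
  rw [e]
  refine core_bound hε hε1 hS H1 H2 (hG4 g hg) ?_ ?_
  · intro I hI
    simpa [x', hI] using hx I hI
  · intro I hI v
    simp [x', hI]

end core

/-! ### Dual Sudakov inequality -/

lemma measurePreserving_neg_stdGaussian (κ : Type*) [Fintype κ] :
    MeasurePreserving (fun x : κ → ℝ => -x) (stdGaussian κ) (stdGaussian κ) := by
  unfold _root_.stdGaussian
  refine measurePreserving_pi (fun _ => gaussianReal 0 1) (fun _ => gaussianReal 0 1)
    (f := fun _ x => -x) fun _ => ⟨measurable_neg, ?_⟩
  rw [gaussianReal_map_neg]; simp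

/-- Shifting a symmetric set by `a` decreases its Gaussian measure by at most the factor
`exp (-|a|² / 2)`: the Cameron–Martin density is averaged over `x` and `-x`, and `cosh ≥ 1`. -/
lemma gauss_shift_lower {κ : Type*} [Fintype κ] {G : Set (κ → ℝ)} (hG : MeasurableSet G)
    (hs : ∀ g ∈ G, -g ∈ G) (a : κ → ℝ) :
    ENNReal.ofReal (Real.exp (-(∑ i, a i ^ 2) / 2)) * stdGaussian κ G
      ≤ stdGaussian κ ((fun x => x - a) ⁻¹' G) := by
  have hm : MeasurableSet ((fun x : κ → ℝ => x - a) ⁻¹' G) := (measurable_id.sub_const a) hG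
  have e1 : stdGaussian κ ((fun x => x - a) ⁻¹' G) = ∫⁻ x, ENNReal.ofReal
      (Real.exp (-(∑ i, a i * x i) - (∑ i, a i ^ 2) / 2)) * G.indicator 1 x ∂stdGaussian κ := by
    rw [← lintegral_indicator_one hm, cameron_martin a (measurable_one.indicator hm)]
    refine lintegral_congr fun x => ?_
    congr 1
    simp [Set.indicator]
  have hmf : Measurable fun x : κ → ℝ => ENNReal.ofReal
      (Real.exp (-(∑ i, a i * x i) - (∑ i, a i ^ 2) / 2)) * G.indicator 1 x :=
    (by fun_prop : Measurable fun x : κ → ℝ => ENNReal.ofReal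
      (Real.exp (-(∑ i, a i * x i) - (∑ i, a i ^ 2) / 2))).mul (measurable_one.indicator hG)
  have e2 : stdGaussian κ ((fun x => x - a) ⁻¹' G) = ∫⁻ x, ENNReal.ofReal
      (Real.exp ((∑ i, a i * x i) - (∑ i, a i ^ 2) / 2)) * G.indicator 1 x ∂stdGaussian κ := by
    rw [e1, ← (measurePreserving_neg_stdGaussian κ).lintegral_comp hmf]
    refine lintegral_congr fun x => ?_
    have : -x ∈ G ↔ x ∈ G := ⟨fun h => by simpa using hs _ h, hs x⟩
    simp [Set.indicator, this]
  have e3 : 2 * (ENNReal.ofReal (Real.exp (-(∑ i, a i ^ 2) / 2)) * stdGaussian κ G)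
      ≤ 2 * stdGaussian κ ((fun x => x - a) ⁻¹' G) := by
    calc _ = ∫⁻ x, 2 * (ENNReal.ofReal (Real.exp (-(∑ i, a i ^ 2) / 2)) * G.indicator 1 x)
          ∂stdGaussian κ := by
          rw [lintegral_const_mul' _ _ (by simp), lintegral_const_mul' _ _ (by simp),
            lintegral_indicator_one hG]
      _ ≤ ∫⁻ x, (ENNReal.ofReal
          (Real.exp (-(∑ i, a i * x i) - (∑ i, a i ^ 2) / 2)) * G.indicator 1 x
          + ENNReal.ofReal
          (Real.exp ((∑ i, a i * x i) - (∑ i, a i ^ 2) / 2)) * G.indicator 1 x)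
          ∂stdGaussian κ := by
          refine lintegral_mono fun x => ?_
          rw [← mul_assoc, ← add_mul, ← ENNReal.ofReal_add (Real.exp_nonneg _)
            (Real.exp_nonneg _)]
          refine mul_le_mul_left ?_ _
          rw [show (2 : ℝ≥0∞) = ENNReal.ofReal 2 by simp, ← ENNReal.ofReal_mul (by norm_num)]
          refine ENNReal.ofReal_le_ofReal ?_
          set s := ∑ i, a i * x i
          rw [show -s - (∑ i, a i ^ 2) / 2 = -(∑ i, a i ^ 2) / 2 + -s by ring,
            show s - (∑ i, a i ^ 2) / 2 = -(∑ i, a i ^ 2) / 2 + s by ring, Real.exp_add,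
            Real.exp_add, ← mul_add, mul_comm]
          refine mul_le_mul_of_nonneg_left ?_ (Real.exp_nonneg _)
          have := Real.one_le_cosh s
          rw [Real.cosh_eq] at this
          linarith
      _ = _ := by rw [lintegral_add_left hmf, ← e1, ← e2, two_mul]
  exact (ENNReal.mul_le_mul_iff_right (by simp) (by simp)).1 e3

/-- A maximal packing is a net. -/
lemma exists_net {α : Type*} (B : Set α) (R : α → α → Prop) (hR : ∀ a, R a a)
    (hRs : ∀ a b, R a b → R b a) (N : ℝ)
    (h : ∀ F : Finset α, (∀ a ∈ F, a ∈ B) → (∀ a ∈ F, ∀ b ∈ F, a ≠ b → ¬ R a b) →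
      (F.card : ℝ) ≤ N) :
    ∃ F : Finset α, (∀ a ∈ F, a ∈ B) ∧ (F.card : ℝ) ≤ N ∧ ∀ y ∈ B, ∃ c ∈ F, R y c := by
  by_contra hc
  push Not at hc
  have : ∀ k : ℕ, ∃ F : Finset α, (∀ a ∈ F, a ∈ B) ∧
      (∀ a ∈ F, ∀ b ∈ F, a ≠ b → ¬ R a b) ∧ F.card = k := by
    intro k
    induction k with
    | zero => exact ⟨∅, by simp, by simp, by simp⟩
    | succ k ih =>
      obtain ⟨F, h1, h2, h3⟩ := ih
      obtain ⟨y, hy, hyF⟩ := hc F h1 (h F h1 h2)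
      refine ⟨insert y F, ?_, ?_, ?_⟩
      · intro a ha
        rcases Finset.mem_insert.1 ha with rfl | ha
        exacts [hy, h1 a ha]
      · intro a ha b hb hab
        rcases Finset.mem_insert.1 ha with ha1 | ha1 <;> rcases Finset.mem_insert.1 hb with hb1 | hb1
        · exact absurd (ha1.trans hb1.symm) hab
        · rw [ha1]; exact hyF b hb1
        · rw [hb1]; exact fun h => hyF a ha1 (hRs _ _ h)
        · exact h2 a ha1 b hb1 hab
      · rw [Finset.card_insert_of_notMem fun hyy => hyF y hyy (hR y), h3]
  obtain ⟨k, hk⟩ := exists_nat_gt N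
  obtain ⟨F, h1, h2, h3⟩ := this k
  have := h F h1 h2
  rw [h3] at this
  linarith

/-- Dual Sudakov inequality: if `G` is symmetric of Gaussian measure at least `1/2`, then the
Euclidean unit ball is covered by at most `2 exp (t ^ 2 / 2)` translates of `(G - G) / t`. -/
lemma dual_sudakov {κ : Type*} [Fintype κ] {G : Set (κ → ℝ)} (hG : MeasurableSet G)
    (hs : ∀ g ∈ G, -g ∈ G) (hG2 : 2⁻¹ ≤ stdGaussian κ G) (t : ℝ) :
    ∃ F : Finset (κ → ℝ), (∀ a ∈ F, ∑ i, a i ^ 2 ≤ 1) ∧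
      (F.card : ℝ) ≤ 2 * Real.exp (t ^ 2 / 2) ∧
      ∀ y : κ → ℝ, ∑ i, y i ^ 2 ≤ 1 → ∃ c ∈ F, ∃ g ∈ G, ∃ g' ∈ G, t • (y - c) = g - g' := by
  have hne : G.Nonempty := by
    rw [Set.nonempty_iff_ne_empty]
    rintro rfl
    simp at hG2
  obtain ⟨g0, hg0⟩ := hne
  refine exists_net {a : κ → ℝ | ∑ i, a i ^ 2 ≤ 1}
    (fun y c => ∃ g ∈ G, ∃ g' ∈ G, t • (y - c) = g - g') ?_ ?_ _ ?_
  · intro a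
    exact ⟨g0, hg0, g0, hg0, by simp⟩
  · rintro a b ⟨g, hg, g', hg', h⟩
    refine ⟨g', hg', g, hg, ?_⟩
    rw [← neg_sub g g', ← h, ← smul_neg, neg_sub]
  · intro F hF hpw
    have hd : Set.PairwiseDisjoint (F : Set (κ → ℝ))
        (fun a => (fun x : κ → ℝ => x - t • a) ⁻¹' G) := by
      intro a ha b hb hab
      rw [Function.onFun, Set.disjoint_left]
      intro x hxa hxb
      refine hpw a ha b hb hab ⟨x - t • b, hxb, x - t • a, hxa, ?_⟩
      rw [smul_sub]; abel
    have hmeas : ∀ a ∈ F, MeasurableSet ((fun x : κ → ℝ => x - t • a) ⁻¹' G) :=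
      fun a _ => (measurable_id.sub_const _) hG
    have h1 : ∑ a ∈ F, stdGaussian κ ((fun x : κ → ℝ => x - t • a) ⁻¹' G) ≤ 1 := by
      rw [← measure_biUnion_finset hd hmeas]
      exact prob_le_one
    have h2 : ∀ a ∈ F, ENNReal.ofReal (Real.exp (-t ^ 2 / 2) * 2⁻¹)
        ≤ stdGaussian κ ((fun x : κ → ℝ => x - t • a) ⁻¹' G) := by
      intro a ha
      refine le_trans ?_ (gauss_shift_lower hG hs (t • a))
      rw [ENNReal.ofReal_mul (Real.exp_nonneg _)]
      refine mul_le_mul' (ENNReal.ofReal_le_ofReal (Real.exp_le_exp.2 ?_)) ?_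
      · simp only [Pi.smul_apply, smul_eq_mul, mul_pow]
        rw [← Finset.mul_sum]
        have : ∑ i, a i ^ 2 ≤ 1 := hF a ha
        nlinarith [sq_nonneg t]
      · rw [ENNReal.ofReal_inv_of_pos (by norm_num)]
        simpa using hG2
    have h3 := (Finset.sum_le_sum h2).trans h1
    rw [Finset.sum_const, nsmul_eq_mul, ← ENNReal.ofReal_natCast, ← ENNReal.ofReal_mul
      (by positivity), ENNReal.ofReal_le_one] at h3
    have h4 : Real.exp (t ^ 2 / 2) * Real.exp (-t ^ 2 / 2) = 1 := by
      rw [← Real.exp_add]; simp; ring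
    have h5 := Real.exp_pos (t ^ 2 / 2)
    calc (F.card : ℝ) = (2 * Real.exp (t ^ 2 / 2)) *
          (F.card * (Real.exp (-t ^ 2 / 2) * 2⁻¹)) := by
            linear_combination (-(F.card : ℝ)) * h4
      _ ≤ _ := mul_le_of_le_one_right (by positivity) h3

/-! ### The chaos norms as seminorms of weight arrays -/

lemma bddAbove_support {m : ℕ} {T : Set (Fin m → ℝ)} (hb : Bornology.IsBounded T)
    (v : Fin m → ℝ) : BddAbove {s : ℝ | ∃ t ∈ T, s = ∑ j, v j * t j} := by
  obtain ⟨R, hR⟩ := hb.exists_norm_le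
  refine ⟨∑ j, |v j| * R, ?_⟩
  rintro s ⟨t, ht, rfl⟩
  refine Finset.sum_le_sum fun j _ => (le_abs_self _).trans ?_
  rw [abs_mul]
  exact mul_le_mul_of_nonneg_left ((norm_le_pi_norm t j).trans (hR t ht)) (abs_nonneg _)

/-- The support function of a nonempty bounded symmetric set, as a seminorm. -/
noncomputable def supSeminorm {m : ℕ} (T : Set (Fin m → ℝ)) (hne : T.Nonempty)
    (hb : Bornology.IsBounded T) (hs : T = -T) : Seminorm ℝ (Fin m → ℝ) :=
  Seminorm.of (fun v => sSup {s : ℝ | ∃ t ∈ T, s = ∑ j, v j * t j})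
    (by
      intro v w
      obtain ⟨t0, ht0⟩ := hne
      refine csSup_le ⟨_, t0, ht0, rfl⟩ ?_
      rintro s ⟨t, ht, rfl⟩
      simp only [Pi.add_apply, add_mul, Finset.sum_add_distrib]
      exact add_le_add (le_csSup (bddAbove_support hb v) ⟨t, ht, rfl⟩)
        (le_csSup (bddAbove_support hb w) ⟨t, ht, rfl⟩))
    (by
      have hn : ∀ v : Fin m → ℝ, {s : ℝ | ∃ t ∈ T, s = ∑ j, (-v) j * t j}
          = {s : ℝ | ∃ t ∈ T, s = ∑ j, v j * t j} := by
        intro v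
        ext s
        constructor
        · rintro ⟨t, ht, rfl⟩
          refine ⟨-t, ?_, by simp⟩
          rw [hs] at ht; simpa using ht
        · rintro ⟨t, ht, rfl⟩
          refine ⟨-t, ?_, by simp⟩
          rw [hs] at ht; simpa using ht
      have hp : ∀ (a : ℝ) (v : Fin m → ℝ), 0 ≤ a →
          sSup {s : ℝ | ∃ t ∈ T, s = ∑ j, (a • v) j * t j}
            = a * sSup {s : ℝ | ∃ t ∈ T, s = ∑ j, v j * t j} := by
        intro a v ha
        rw [← smul_eq_mul, ← Real.sSup_smul_of_nonneg ha]
        congr 1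
        ext s
        simp only [Set.mem_ofPred_eq, Set.mem_smul_set, Pi.smul_apply, smul_eq_mul]
        constructor
        · rintro ⟨t, ht, rfl⟩
          exact ⟨_, ⟨t, ht, rfl⟩, by simp [Finset.mul_sum, mul_assoc]⟩
        · rintro ⟨_, ⟨t, ht, rfl⟩, rfl⟩
          exact ⟨t, ht, by simp [Finset.mul_sum, mul_assoc]⟩
      intro a v
      rcases le_total 0 a with ha | ha
      · rw [Real.norm_of_nonneg ha]
        exact hp a v ha
      · rw [Real.norm_of_nonpos ha, ← hp (-a) v (by linarith), ← hn]
        simp)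

section chaos

variable {n m d : ℕ}

/-- The vector `∑_i W_i (∏_{J ∈ P'} ω_{i_J}) a_i` of `ℝ^m`. -/
noncomputable def coefArr (A : (Fin (d + 1) → Fin n) → Fin m → ℝ)
    (P' : Finset (Finset (Fin (d + 1)))) (W : (Fin (d + 1) → Fin n) → ℝ)
    (ω : GIdx (d + 1) n → ℝ) : Fin m → ℝ :=
  fun j => ∑ i, W i * (∏ J ∈ P', ω (blk J i)) * A i j

lemma coefArr_integrable (A : (Fin (d + 1) → Fin n) → Fin m → ℝ)
    (P' : Finset (Finset (Fin (d + 1)))) (W : (Fin (d + 1) → Fin n) → ℝ)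
    (σ : Seminorm ℝ (Fin m → ℝ)) :
    Integrable (fun ω => σ (coefArr A P' W ω)) (stdGaussian (GIdx (d + 1) n)) := by
  refine seminorm_integrable σ fun j => ?_
  exact integrable_finsetSum _ fun i _ => ((integrable_prod_blk P' i).const_mul _).mul_const _

/-- The seminorm `W ↦ E σ(∑_i W_i (∏_{J ∈ P'} g_{i_J}) a_i)` on weight arrays. -/
noncomputable def avgSeminorm (A : (Fin (d + 1) → Fin n) → Fin m → ℝ)
    (P' : Finset (Finset (Fin (d + 1)))) (σ : Seminorm ℝ (Fin m → ℝ)) :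
    Seminorm ℝ ((Fin (d + 1) → Fin n) → ℝ) :=
  Seminorm.of (fun W => ∫ ω, σ (coefArr A P' W ω) ∂stdGaussian (GIdx (d + 1) n))
    (by
      intro W W'
      rw [← integral_add (coefArr_integrable A P' W σ) (coefArr_integrable A P' W' σ)]
      refine integral_mono (coefArr_integrable A P' _ σ)
        ((coefArr_integrable A P' W σ).add (coefArr_integrable A P' W' σ)) fun ω => ?_
      have : coefArr A P' (W + W') ω = coefArr A P' W ω + coefArr A P' W' ω := by
        ext j; simp [coefArr, add_mul, Finset.sum_add_distrib]
      simp only [this]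
      exact map_add_le_add σ _ _)
    (by
      intro a W
      rw [← integral_const_mul]
      refine integral_congr_ae (Filter.Eventually.of_forall fun ω => ?_)
      have : coefArr A P' (a • W) ω = a • coefArr A P' W ω := by
        ext j; simp [coefArr, mul_assoc, Finset.mul_sum]
      simp only [this]
      exact map_smul_eq_mul σ _ _)

lemma avgSeminorm_apply (A : (Fin (d + 1) → Fin n) → Fin m → ℝ)
    (P' : Finset (Finset (Fin (d + 1)))) (σ : Seminorm ℝ (Fin m → ℝ))
    (W : (Fin (d + 1) → Fin n) → ℝ) : avgSeminorm A P' σ W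
      = ∫ ω, σ (coefArr A P' W ω) ∂stdGaussian (GIdx (d + 1) n) := rfl

variable (A : (Fin (d + 1) → Fin n) → Fin m → ℝ) {T : Set (Fin m → ℝ)} (hne : T.Nonempty)
    (hb : Bornology.IsBounded T) (hs : T = -T)

lemma avg_supSeminorm_eq (P' : Finset (Finset (Fin (d + 1)))) (W : (Fin (d + 1) → Fin n) → ℝ) :
    avgSeminorm A P' (supSeminorm T hne hb hs) W
      = ∫ ω : GIdx (d + 1) n → ℝ, sSup { s : ℝ | ∃ t ∈ T, s = ∑ i : Fin (d + 1) → Fin n,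
          ∑ j : Fin m, W i * (∏ J ∈ P', ω ⟨J, fun l => i l.1⟩) * A i j * t j }
        ∂ stdGaussian (GIdx (d + 1) n) := by
  rw [avgSeminorm_apply]
  congr 1
  ext ω
  change sSup _ = sSup _
  congr 1
  ext s
  refine exists_congr fun t => and_congr_right fun _ => ?_
  rw [Finset.sum_comm]
  simp only [coefArr, Finset.sum_mul]
  rfl

lemma abs_prod_le_one {P : Finset (Finset (Fin (d + 1)))} {x : GIdx (d + 1) n → ℝ}
    (hx : UnitOn P x) (i : Fin (d + 1) → Fin n) : |∏ I ∈ P, x (blk I i)| ≤ 1 := by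
  rw [Finset.abs_prod]
  refine Finset.prod_le_one (fun _ _ => abs_nonneg _) fun I hI => ?_
  rw [← sq_le_one_iff_abs_le_one]
  exact (Finset.single_le_sum (f := fun v => x ⟨I, v⟩ ^ 2) (fun _ _ => sq_nonneg _)
    (Finset.mem_univ _)).trans (hx I hI)

lemma le_chaosNormT (P' P : Finset (Finset (Fin (d + 1)))) {x : GIdx (d + 1) n → ℝ}
    (hx : UnitOn P x) :
    avgSeminorm A P' (supSeminorm T hne hb hs) (fun i => ∏ I ∈ P, x (blk I i))
      ≤ chaosNormT A T P' P := by
  refine le_csSup ?_ ⟨fun I v => x ⟨I, v⟩, hx, avg_supSeminorm_eq A hne hb hs P' _⟩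
  set Φ := avgSeminorm A P' (supSeminorm T hne hb hs) with hΦ
  refine ⟨∑ i, Φ (Pi.single i 1), ?_⟩
  rintro r ⟨y, hy, rfl⟩
  have := avg_supSeminorm_eq A hne hb hs P' (fun i => ∏ I ∈ P, y I fun l => i l.1)
  rw [← this]
  refine (seminorm_le_sum _ _).trans (Finset.sum_le_sum fun i _ => ?_)
  refine mul_le_of_le_one_left (apply_nonneg _ _) ?_
  exact abs_prod_le_one (x := fun q => y q.1 q.2) hy i

lemma chaosNormT_nonneg (hne : T.Nonempty) (hb : Bornology.IsBounded T) (hs : T = -T)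
    (P' P : Finset (Finset (Fin (d + 1)))) : 0 ≤ chaosNormT A T P' P := by
  refine Real.sSup_nonneg ?_
  rintro r ⟨y, hy, rfl⟩
  rw [← avg_supSeminorm_eq A hne hb hs P' (fun i => ∏ I ∈ P, y I fun l => i l.1)]
  exact apply_nonneg _ _

/-- The right-hand side `∑_k ε^(d-k) s_k(A)`, with `ε = p^(-1/2)`. -/
noncomputable def totalNorm (A : (Fin (d + 1) → Fin n) → Fin m → ℝ) (T : Set (Fin m → ℝ))
    (ε : ℝ) : ℝ := ∑ k ∈ Finset.range (d + 1), ε ^ (d - k) * sNorm A T k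

lemma sNorm_nonneg (hne : T.Nonempty) (hb : Bornology.IsBounded T) (hs : T = -T)
    (k : ℕ) : 0 ≤ sNorm A T k :=
  Finset.sum_nonneg fun _ _ => chaosNormT_nonneg A hne hb hs _ _

lemma totalNorm_nonneg (hne : T.Nonempty) (hb : Bornology.IsBounded T) (hs : T = -T)
    {ε : ℝ} (hε : 0 < ε) : 0 ≤ totalNorm A T ε :=
  Finset.sum_nonneg fun _ _ => mul_nonneg (by positivity) (sNorm_nonneg A hne hb hs _)

lemma chaosNormT_le_total (hne : T.Nonempty) (hb : Bornology.IsBounded T) (hs : T = -T)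
    {ε : ℝ} (hε : 0 < ε) {P P' : Finset (Finset (Fin (d + 1)))}
    (h : IsPartitionPair Finset.univ P P') {k : ℕ} (hk : P.card + k = d) :
    ε ^ k * chaosNormT A T P' P ≤ totalNorm A T ε := by
  have h1 : chaosNormT A T P' P ≤ sNorm A T P.card :=
    Finset.single_le_sum (f := fun PP : Finset (Finset (Fin (d + 1))) ×
      Finset (Finset (Fin (d + 1))) => chaosNormT A T PP.2 PP.1)
      (fun _ _ => chaosNormT_nonneg A hne hb hs _ _)
      (Finset.mem_filter.2 ⟨Finset.mem_univ (P, P'), h, rfl⟩)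
  have h2 : ε ^ (d - P.card) * sNorm A T P.card ≤ totalNorm A T ε :=
    Finset.single_le_sum (f := fun k => ε ^ (d - k) * sNorm A T k)
      (fun _ _ => mul_nonneg (by positivity) (sNorm_nonneg A hne hb hs _))
      (Finset.mem_range.2 (by omega))
  rw [show d - P.card = k by omega] at h2
  exact (mul_le_mul_of_nonneg_left h1 (by positivity)).trans h2

lemma isPartitionPair_iff {S : Finset (Fin d)} {P P' : Finset (Finset (Fin d))} :
    IsPartitionPair S P P' ↔ (∀ I ∈ P, I ∉ P') ∧ (∀ I, I ∈ P ∨ I ∈ P' → I.Nonempty) ∧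
      (∀ I, I ∈ P ∨ I ∈ P' → ∀ I', I' ∈ P ∨ I' ∈ P' → I ≠ I' → ∀ a ∈ I, a ∉ I') ∧
      ∀ a, (∃ I, (I ∈ P ∨ I ∈ P') ∧ a ∈ I) ↔ a ∈ S := by
  unfold IsPartitionPair IsPartition
  rw [Finset.disjoint_left]
  simp only [Finset.mem_union, Finset.disjoint_left]
  refine and_congr_right fun _ => and_congr_right fun _ => and_congr_right fun _ => ?_
  rw [Finset.ext_iff]
  simp only [Finset.mem_sup, id, Finset.mem_union]

/-- Merging `j0` with the blocks of `Q` into one deterministic block gives a partition of all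
indices. -/
lemma pair_merge {P P' Q : Finset (Finset (Fin d))} {j0 : Fin d}
    (h : IsPartitionPair (Finset.univ.erase j0) P P') (hQ : Q ⊆ P) :
    insert j0 (Q.sup id) ∉ P \ Q ∧
      IsPartitionPair Finset.univ (insert (insert j0 (Q.sup id)) (P \ Q)) P' := by
  rw [isPartitionPair_iff] at h ⊢
  obtain ⟨h1, h2, h3, h4⟩ := h
  have hj : ∀ I, I ∈ P ∨ I ∈ P' → j0 ∉ I := fun I hI hj => by
    have := (h4 j0).1 ⟨I, hI, hj⟩
    simp at this
  set U := insert j0 (Q.sup id) with hU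
  have hjU : j0 ∈ U := Finset.mem_insert_self _ _
  have hUm : ∀ a, a ∈ U ↔ a = j0 ∨ ∃ I ∈ Q, a ∈ I := by
    intro a; simp [hU, Finset.mem_sup]
  have hUP : ∀ I, I ∈ P ∨ I ∈ P' → I ≠ U := fun I hI e => hj I hI (e ▸ hjU)
  -- a block outside `Q` does not meet the merged block
  have hUd : ∀ I, (I ∈ P ∧ I ∉ Q) ∨ I ∈ P' → ∀ a ∈ I, a ∉ U := by
    intro I hI a ha haU
    have hI' : I ∈ P ∨ I ∈ P' := hI.imp And.left id
    rcases (hUm a).1 haU with rfl | ⟨K, hK, haK⟩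
    · exact hj I hI' ha
    · refine h3 I hI' K (Or.inl (hQ hK)) ?_ a ha haK
      rintro rfl
      rcases hI with hI | hI
      · exact hI.2 hK
      · exact h1 _ (hQ hK) hI
  refine ⟨fun hm => hUP U (Or.inl (Finset.mem_sdiff.1 hm).1) rfl, ?_, ?_, ?_, ?_⟩
  · intro I hI
    rcases Finset.mem_insert.1 hI with rfl | hI
    · exact fun hI => hUP _ (Or.inr hI) rfl
    · exact h1 I (Finset.mem_sdiff.1 hI).1
  · intro I hI
    simp only [Finset.mem_insert, Finset.mem_sdiff] at hI
    rcases hI with (rfl | hI) | hI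
    · exact ⟨j0, hjU⟩
    · exact h2 I (Or.inl hI.1)
    · exact h2 I (Or.inr hI)
  · intro I hI I' hI' hne a ha ha'
    simp only [Finset.mem_insert, Finset.mem_sdiff, or_assoc] at hI hI'
    rcases hI with rfl | hI <;> rcases hI' with rfl | hI'
    · exact hne rfl
    · exact hUd I' hI' a ha' ha
    · exact hUd I hI a ha ha'
    · exact h3 I (hI.imp And.left id) I' (hI'.imp And.left id) hne a ha ha'
  · intro a
    simp only [Finset.mem_univ, iff_true]
    by_cases haU : a ∈ U
    · exact ⟨U, Or.inl (Finset.mem_insert_self _ _), haU⟩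
    · have hne : a ≠ j0 := fun e => haU (e ▸ hjU)
      obtain ⟨I, hI, haI⟩ := (h4 a).2 (by simp [hne])
      refine ⟨I, ?_, haI⟩
      rcases hI with hI | hI
      · left
        refine Finset.mem_insert_of_mem (Finset.mem_sdiff.2 ⟨hI, fun hIQ => ?_⟩)
        exact haU ((hUm a).2 (Or.inr ⟨I, hIQ, haI⟩))
      · exact Or.inr hI

/-- Turning the blocks of `Q` into Gaussian ones and adding the Gaussian block `{j0}` gives a
partition of all indices. -/
lemma pair_gauss {P P' Q : Finset (Finset (Fin d))} {j0 : Fin d}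
    (h : IsPartitionPair (Finset.univ.erase j0) P P') (hQ : Q ⊆ P) :
    {j0} ∉ P ∪ P' ∧ Disjoint P' Q ∧
      IsPartitionPair Finset.univ (P \ Q) (insert {j0} (P' ∪ Q)) := by
  rw [isPartitionPair_iff] at h ⊢
  obtain ⟨h1, h2, h3, h4⟩ := h
  have hj : ∀ I, I ∈ P ∨ I ∈ P' → j0 ∉ I := fun I hI hj => by
    have := (h4 j0).1 ⟨I, hI, hj⟩
    simp at this
  have hjP : ({j0} : Finset (Fin d)) ∉ P ∪ P' := fun hm =>
    hj _ (Finset.mem_union.1 hm) (Finset.mem_singleton_self _)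
  have hmem : ∀ I, I ∈ P \ Q ∨ I ∈ insert {j0} (P' ∪ Q) ↔ I = {j0} ∨ (I ∈ P ∨ I ∈ P') := by
    intro I
    simp only [Finset.mem_insert, Finset.mem_sdiff, Finset.mem_union]
    have := @hQ I
    tauto
  refine ⟨hjP, ?_, ?_, ?_, ?_, ?_⟩
  · exact Finset.disjoint_left.2 fun I hI hIQ => h1 I (hQ hIQ) hI
  · intro I hI
    simp only [Finset.mem_insert, Finset.mem_sdiff, Finset.mem_union] at hI ⊢
    rintro (rfl | hI' | hI')
    · exact hjP (Finset.mem_union_left _ hI.1)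
    · exact h1 I hI.1 hI'
    · exact hI.2 hI'
  · intro I hI
    rcases (hmem I).1 hI with rfl | hI
    · simp
    · exact h2 I hI
  · intro I hI I' hI' hne a ha ha'
    rcases (hmem I).1 hI with rfl | hI <;> rcases (hmem I').1 hI' with rfl | hI'
    · exact hne rfl
    · rw [Finset.mem_singleton] at ha
      exact hj I' hI' (ha ▸ ha')
    · rw [Finset.mem_singleton] at ha'
      exact hj I hI (ha' ▸ ha)
    · exact h3 I hI I' hI' hne a ha ha'
  · intro a
    simp only [Finset.mem_univ, iff_true]
    by_cases hne : a = j0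
    · exact ⟨{j0}, (hmem _).2 (Or.inl rfl), by simp [hne]⟩
    · obtain ⟨I, hI, haI⟩ := (h4 a).2 (by simp [hne])
      exact ⟨I, (hmem I).2 (Or.inr hI), haI⟩

lemma hypTensor_avg (hd : 1 ≤ d) {ε : ℝ} (hε : 0 < ε) {P P' : Finset (Finset (Fin (d + 1)))}
    {j0 : Fin (d + 1)} (h : IsPartitionPair (Finset.univ.erase j0) P P') (hc : P.card = d - 1) :
    HypTensor j0 P (avgSeminorm A P' (supSeminorm T hne hb hs)) ε (totalNorm A T ε) := by
  intro Q hQ x hx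
  obtain ⟨hU, hpp⟩ := pair_merge h hQ
  generalize insert j0 (Q.sup id) = U at hU hpp ⊢
  intro z hz
  have hQc := Finset.card_le_card hQ
  have hcard : (insert U (P \ Q)).card + Q.card = d := by
    rw [Finset.card_insert_of_notMem hU, Finset.card_sdiff_of_subset hQ]
    omega
  refine le_trans (mul_le_mul_of_nonneg_left ?_ (by positivity))
    (chaosNormT_le_total A hne hb hs hε hpp hcard)
  let y : (I : Finset (Fin (d + 1))) → ({l // l ∈ I} → Fin n) → ℝ :=
    Function.update (fun I v => x ⟨I, v⟩) U z
  have hyU : y U = z := Function.update_self _ _ _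
  have hyI : ∀ I ∈ P \ Q, y I = fun v => x ⟨I, v⟩ := fun I hI =>
    Function.update_of_ne (by rintro rfl; exact hU hI) _ _
  have := le_chaosNormT A hne hb hs P' (insert U (P \ Q)) (x := fun q => y q.1 q.2) (by
    intro I hI
    rcases Finset.mem_insert.1 hI with rfl | hI
    · simpa [hyU] using hz
    · simp only [hyI I hI]
      exact hx I (Finset.mem_sdiff.1 hI).1)
  refine le_trans (le_of_eq ?_) this
  congr 1
  ext i
  rw [Finset.prod_insert hU]
  congr 1
  · simp [blk, hyU]
  · refine Finset.prod_congr rfl fun I hI => ?_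
    simp [blk, hyI I hI]

lemma hypGauss_avg (hd : 1 ≤ d) {ε : ℝ} (hε : 0 < ε) {P P' : Finset (Finset (Fin (d + 1)))}
    {j0 : Fin (d + 1)} (h : IsPartitionPair (Finset.univ.erase j0) P P') (hc : P.card = d - 1) :
    HypGauss j0 P (avgSeminorm A P' (supSeminorm T hne hb hs)) ε (totalNorm A T ε) := by
  intro Q hQ x hx
  obtain ⟨hj, hdis, hpp⟩ := pair_gauss h hQ
  have hQc := Finset.card_le_card hQ
  have hcard : (P \ Q).card + (Q.card + 1) = d := by
    rw [Finset.card_sdiff_of_subset hQ]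
    omega
  refine le_trans (mul_le_mul_of_nonneg_left ?_ (by positivity))
    (chaosNormT_le_total A hne hb hs hε hpp hcard)
  have := le_chaosNormT A hne hb hs (insert {j0} (P' ∪ Q)) (P \ Q) (x := x)
    (fun I hI => hx I (Finset.mem_sdiff.1 hI).1)
  refine le_trans (le_of_eq ?_) this
  rw [avgSeminorm_apply, ← integral_resample_two {q | q.1 ∈ Q} {q | q.1 = {j0}}
    (coefArr_integrable A _ _ _)]
  simp_rw [avgSeminorm_apply]
  congr 1; ext h
  congr 1; ext g
  congr 1; ext ω
  congr 1
  ext j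
  simp only [coefArr]
  refine Finset.sum_congr rfl fun i _ => ?_
  have hjQ : ({j0} : Finset (Fin (d + 1))) ∉ Q := fun hm => hj (Finset.mem_union_left _ (hQ hm))
  have hjP' : ({j0} : Finset (Fin (d + 1))) ∉ P' := fun hm => hj (Finset.mem_union_right _ hm)
  rw [Finset.prod_insert (by simp [hjQ, hjP']), Finset.prod_union hdis]
  have key : ∀ a b c : ℝ, a = g (blk {j0} i) → b = ∏ J ∈ P', ω (blk J i) →
      c = ∏ J ∈ Q, h (blk J i) →
      (g (blk {j0} i) * ((∏ I ∈ Q, h (blk I i)) * ∏ I ∈ P \ Q, x (blk I i)) *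
        ∏ J ∈ P', ω (blk J i)) * A i j
        = (∏ I ∈ P \ Q, x (blk I i)) * (a * (b * c)) * A i j := by
    rintro _ _ _ rfl rfl rfl; ring
  refine key _ _ _ ?_ (Finset.prod_congr rfl fun J hJ => ?_)
    (Finset.prod_congr rfl fun J hJ => ?_)
  · simp [blk, hjQ]
  · have k1 : J ∉ Q := fun hm => Finset.disjoint_left.1 hdis hJ hm
    have k2 : J ≠ {j0} := fun e => hjP' (e ▸ hJ)
    simp [blk, k1, k2]
  · simp [blk, hJ]

end chaos

/-! ### Colorings and covering numbers -/

section final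

variable {n m d : ℕ}

/-- A vector `y ∈ ℝ^n`, viewed as living on the block `{j0}`. -/
noncomputable def embBlk {D n : ℕ} (j0 : Fin D) (y : Fin n → ℝ) : GIdx D n → ℝ :=
  fun q => if h : q.1 = {j0} then y (q.2 ⟨j0, by rw [h]; exact Finset.mem_singleton_self _⟩) else 0

lemma embBlk_blk {D n : ℕ} (j0 : Fin D) (y : Fin n → ℝ) (i : Fin D → Fin n) :
    embBlk j0 y (blk {j0} i) = y (i j0) := by
  simp [embBlk, blk]

lemma embBlk_sub {D n : ℕ} (j0 : Fin D) (y y' : Fin n → ℝ) :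
    embBlk j0 (y - y') = embBlk j0 y - embBlk j0 y' := by
  ext q
  by_cases h : q.1 = {j0} <;> simp [embBlk, h]

lemma sum_embBlk {D n : ℕ} (j0 : Fin D) (y : Fin n → ℝ) :
    ∑ q, embBlk j0 y q ^ 2 = ∑ a, y a ^ 2 := by
  rw [Fintype.sum_sigma, Finset.sum_eq_single {j0}]
  · let e : (({l // l ∈ ({j0} : Finset (Fin D))}) → Fin n) ≃ Fin n :=
      Equiv.funUnique _ _
    rw [← e.sum_comp]
    refine Finset.sum_congr rfl fun v _ => ?_
    simp only [embBlk, dite_true]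
    rfl
  · intro I _ hI
    exact Finset.sum_eq_zero fun v _ => by simp [embBlk, hI]
  · simp

/-- The Euclidean unit ball of `ℝ^n` splits into at most `2 exp (t ^ 2 / 2)` pieces on each of
which `Φ (weight j0 P · x)` oscillates by at most `4 C S / (ε t)`, uniformly in `x`. -/
lemma exists_coloring {j0 : Fin (d + 1)} {P : Finset (Finset (Fin (d + 1)))}
    {Φ : Seminorm ℝ ((Fin (d + 1) → Fin n) → ℝ)} {ε S : ℝ}
    (hε : 0 < ε) (hε1 : ε ≤ 1) (hS : 0 ≤ S) (H1 : HypTensor j0 P Φ ε S)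
    (H2 : HypGauss j0 P Φ ε S) {t : ℝ} (ht : 0 < t) {M : ℕ}
    (hM : M = ⌊2 * Real.exp (t ^ 2 / 2)⌋₊) :
    ∃ col : (Fin n → ℝ) → Fin M, ∀ y y' : Fin n → ℝ, ∑ a, y a ^ 2 ≤ 1 → ∑ a, y' a ^ 2 ≤ 1 →
      col y = col y' → ∀ x, UnitOn P x → Φ (weight j0 P (embBlk j0 (y - y')) x)
        ≤ 4 * ((2 * 2 ^ P.card + P.card + 1) * (S / ε)) / t := by
  have hM1 : 0 < M := by
    rw [hM, Nat.floor_pos]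
    linarith [Real.one_le_exp (by positivity : 0 ≤ t ^ 2 / 2)]
  rcases hS.eq_or_lt with rfl | hS
  · refine ⟨fun _ => ⟨0, hM1⟩, fun y y' hy hy' _ x hx => ?_⟩
    have h0 : ∀ w : Fin n → ℝ, ∑ a, w a ^ 2 ≤ 1 → Φ (weight j0 P (embBlk j0 w) x) ≤ 0 := by
      intro w hw
      have hz := H1 ∅ (Finset.empty_subset _) x hx
        (fun v => embBlk j0 w ⟨{j0}, fun l => v ⟨l.1, by
          have := l.2; simp only [Finset.mem_singleton] at this; simp [this]⟩⟩) (by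
        refine le_trans (le_of_eq ?_) hw
        let e : ({l // l ∈ insert j0 ((∅ : Finset (Finset (Fin (d + 1)))).sup id)} → Fin n)
            ≃ Fin n := Equiv.funUnique {l // l ∈ ({j0} : Finset (Fin (d + 1)))} _
        rw [← e.sum_comp]
        refine Finset.sum_congr rfl fun v _ => ?_
        simp only [embBlk, dite_true]
        rfl)
      rw [Finset.card_empty, pow_zero, one_mul, Finset.sdiff_empty] at hz
      exact hz
    rw [embBlk_sub, sub_eq_add_neg, weight_add, weight_neg]
    refine (map_add_le_add Φ _ _).trans ?_
    rw [map_neg_eq_map]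
    simpa using add_le_add (h0 y hy) (h0 y' hy')
  · obtain ⟨G, hG1, hG2, hG3, hG4⟩ := exists_core_set hε hε1 hS H1 H2
    obtain ⟨F, -, hF1, hF2⟩ := dual_sudakov hG1 hG2 hG3 t
    set s := (2 * 2 ^ P.card + P.card + 1) * (S / ε) with hs
    have hFM : F.card ≤ M := by rw [hM]; exact Nat.le_floor hF1
    have hc : ∀ y : Fin n → ℝ, ∃ c : GIdx (d + 1) n → ℝ, ∑ a, y a ^ 2 ≤ 1 → c ∈ F ∧
        ∃ g ∈ G, ∃ g' ∈ G, t • (embBlk j0 y - c) = g - g' := by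
      intro y
      by_cases hy : ∑ a, y a ^ 2 ≤ 1
      · obtain ⟨c, hc1, hc2⟩ := hF2 (embBlk j0 y) (by rw [sum_embBlk]; exact hy)
        exact ⟨c, fun _ => ⟨hc1, hc2⟩⟩
      · exact ⟨0, fun h => absurd h hy⟩
    choose c hc using hc
    refine ⟨fun y => if h : c y ∈ F then Fin.castLE hFM (F.equivFin ⟨c y, h⟩) else ⟨0, hM1⟩,
      fun y y' hy hy' hcol x hx => ?_⟩
    obtain ⟨hm, g1, hg1, g2, hg2, e1⟩ := hc y hy
    obtain ⟨hm', g3, hg3, g4, hg4, e2⟩ := hc y' hy'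
    simp only [dif_pos hm, dif_pos hm'] at hcol
    have hcc : c y = c y' := by
      have := F.equivFin.injective ((Fin.castLE_injective hFM) hcol)
      exact congrArg Subtype.val this
    have e3 : t • embBlk j0 (y - y') = (g1 + -g2) + (-g3 + g4) := by
      rw [embBlk_sub, show embBlk j0 y - embBlk j0 y'
        = (embBlk j0 y - c y) - (embBlk j0 y' - c y') by rw [hcc]; abel, smul_sub, e1, e2]
      abel
    have h4 : Φ (weight j0 P (t • embBlk j0 (y - y')) x) ≤ 4 * s := by
      rw [e3]
      simp only [weight_add, weight_neg]
      refine (map_add_le_add Φ _ _).trans ?_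
      have k1 := map_add_le_add Φ (weight j0 P g1 x) (-weight j0 P g2 x)
      have k2 := map_add_le_add Φ (-weight j0 P g3 x) (weight j0 P g4 x)
      rw [map_neg_eq_map] at k1 k2
      linarith [hG4 g1 hg1 x hx, hG4 g2 hg2 x hx, hG4 g3 hg3 x hx, hG4 g4 hg4 x hx]
    rw [weight_smul, map_smul_eq_mul, Real.norm_of_nonneg ht.le] at h4
    rw [le_div_iff₀ ht]
    linarith

lemma chaosNormTFix_le (A : (Fin (d + 1) → Fin n) → Fin m → ℝ) {T : Set (Fin m → ℝ)}
    (hne : T.Nonempty) (hb : Bornology.IsBounded T) (hs : T = -T)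
    {P P' : Finset (Finset (Fin (d + 1)))} {j0 : Fin (d + 1)} {y : Fin n → ℝ} {δ : ℝ}
    (hδ : 0 ≤ δ) (h : ∀ x, UnitOn P x →
      avgSeminorm A P' (supSeminorm T hne hb hs) (weight j0 P (embBlk j0 y) x) ≤ δ) :
    chaosNormTFix A T P' P j0 y ≤ δ := by
  refine Real.sSup_le ?_ hδ
  rintro r ⟨x, hx, rfl⟩
  refine le_trans (le_of_eq ?_) (h (fun q => x q.1 q.2) hx)
  rw [avg_supSeminorm_eq]
  simp only [weight, embBlk_blk, mul_comm (y _)]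
  rfl

/-- Covering from a finite coloring with small color classes. -/
lemma covNum_le_of_coloring {β κ : Type*} [Fintype κ] [Nonempty β] (B : Set β) (ρ : β → β → ℝ)
    (r : ℝ) (col : β → κ) (h : ∀ x ∈ B, ∀ y ∈ B, col x = col y → ρ x y ≤ r / 2) :
    covNum B ρ r ≤ Fintype.card κ := by
  let rep : κ → β := fun k => if hk : ∃ x ∈ B, col x = k then hk.choose else Classical.arbitrary β
  have hrep : ∀ y ∈ B, rep (col y) ∈ B ∧ col (rep (col y)) = col y := by
    intro y hy
    have hk : ∃ x ∈ B, col x = col y := ⟨y, hy, rfl⟩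
    simp only [rep, dif_pos hk]
    exact hk.choose_spec
  have h1 : covNum B ρ r ≤ ((Finset.univ.image rep).card : ℝ) := by
    refine csInf_le ⟨0, ?_⟩ ⟨Finset.univ.image rep, rfl, ?_⟩
    · rintro N ⟨c, rfl, -⟩
      positivity
    · intro y hy
      simp only [Set.mem_iUnion]
      exact ⟨rep (col y), Finset.mem_image_of_mem _ (Finset.mem_univ _),
        h _ (hrep y hy).1 y hy (hrep y hy).2⟩
  exact h1.trans (by exact_mod_cast Finset.card_image_le)

lemma rpow_eq_pow {p : ℝ} (hp : 1 ≤ p) {k : ℕ} (hk : k ≤ d) :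
    p ^ (((k : ℝ) + 1 - (d + 1)) / 2) = (Real.sqrt p)⁻¹ ^ (d - k) := by
  have hp0 : 0 ≤ p := by linarith
  rw [Real.sqrt_eq_rpow, ← Real.rpow_neg hp0, ← Real.rpow_natCast, ← Real.rpow_mul hp0,
    Nat.cast_sub hk]
  congr 1
  ring

end final

/- Here the chaos is of order `d+1`: the paper's `d` equals `d+1 ≥ 3` below. -/
theorem entropy_bound_hatRho (d : ℕ) (hd : 2 ≤ d) :
    ∃ C : ℝ, 0 < C ∧
      ∀ (n m : ℕ) (A : (Fin (d + 1) → Fin n) → Fin m → ℝ)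
        (T : Set (Fin m → ℝ)), T.Nonempty → Bornology.IsBounded T → T = -T →
        ∀ p : ℝ, 1 ≤ p → ∀ l : ℕ,
        covNum { x : PIdx d → Fin n → ℝ | ∀ k, ∑ j, x k j ^ 2 ≤ 1 }
            (fun x y => hatAlpha A T (x - y))
            ((2 : ℝ)⁻¹ ^ l * ∑ k ∈ Finset.range (d + 1),
              p ^ (((k : ℝ) + 1 - (d + 1)) / 2) * sNorm A T k)
          ≤ Real.exp (C * 2 ^ (2 * l) * p) := by
  let ι := PIdx d × (Finset (Finset (Fin (d + 1))) × Finset (Finset (Fin (d + 1))))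
  have : Nonempty (PIdx d) := ⟨⟨Fin.last d, by
    intro h; have := congrArg Fin.val h; simp at this; omega⟩⟩
  have : Nonempty ι := inferInstance
  set q : ℝ := (Fintype.card ι : ℝ) with hq
  have hq0 : 0 < q := by rw [hq]; exact_mod_cast Fintype.card_pos
  set C0 : ℝ := 2 * 2 ^ (d - 1) + ((d - 1 : ℕ) : ℝ) + 1 with hC0
  have hC00 : 0 < C0 := by positivity
  -- the scale factor making the sum of all `q` oscillations at most half the target radius
  set K : ℝ := 8 * C0 * q with hK
  have hK0 : 0 < K := by positivity
  refine ⟨q * (1 + K ^ 2 / 2), by positivity, ?_⟩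
  intro n m A T hne hb hs p hp l
  have hp0 : 0 < p := by linarith
  set ε : ℝ := (Real.sqrt p)⁻¹ with hε
  have hsq : 0 < Real.sqrt p := Real.sqrt_pos.2 hp0
  have hε0 : 0 < ε := by positivity
  have hε1 : ε ≤ 1 := inv_le_one_of_one_le₀ (Real.one_le_sqrt.2 hp)
  have hS : ∑ k ∈ Finset.range (d + 1), p ^ (((k : ℝ) + 1 - (d + 1)) / 2) * sNorm A T k
      = totalNorm A T ε := by
    refine Finset.sum_congr rfl fun k hk => ?_
    rw [rpow_eq_pow hp (by simpa [Nat.lt_succ_iff] using hk)]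
  rw [hS]
  set S := totalNorm A T ε with hSdef
  have hS0 : 0 ≤ S := totalNorm_nonneg A hne hb hs hε0
  set t : ℝ := K * 2 ^ l / ε with ht
  have ht0 : 0 < t := by positivity
  set M : ℕ := ⌊2 * Real.exp (t ^ 2 / 2)⌋₊ with hM
  set δ : ℝ := (2 : ℝ)⁻¹ ^ l * S / 2 / q with hδ
  have hδ0 : 0 ≤ δ := by positivity
  have hδ' : 4 * (C0 * (S / ε)) / t = δ := by
    rw [hδ, ht, hK, inv_pow]
    field_simp
    ring
  have hM1 : 0 < M := by
    rw [hM, Nat.floor_pos]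
    linarith [Real.one_le_exp (by positivity : 0 ≤ t ^ 2 / 2)]
  have hcol : ∀ k : ι, ∃ col : (Fin n → ℝ) → Fin M,
      IsPartitionPair (Finset.univ.erase k.1.1) k.2.1 k.2.2 ∧ k.2.1.card = d - 1 →
      ∀ y y' : Fin n → ℝ, ∑ a, y a ^ 2 ≤ 1 → ∑ a, y' a ^ 2 ≤ 1 → col y = col y' →
        chaosNormTFix A T k.2.2 k.2.1 k.1.1 (y - y') ≤ δ := by
    intro k
    by_cases hk : IsPartitionPair (Finset.univ.erase k.1.1) k.2.1 k.2.2 ∧ k.2.1.card = d - 1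
    · obtain ⟨col, hcol⟩ := exists_coloring hε0 hε1 hS0
        (hypTensor_avg A hne hb hs (by omega) hε0 hk.1 hk.2)
        (hypGauss_avg A hne hb hs (by omega) hε0 hk.1 hk.2) ht0 hM
      refine ⟨col, fun _ y y' hy hy' hc => chaosNormTFix_le A hne hb hs hδ0 fun x hx => ?_⟩
      refine (hcol y y' hy hy' hc x hx).trans (le_of_eq ?_)
      rw [hk.2, ← hC0, hδ']
    · exact ⟨fun _ => ⟨0, hM1⟩, fun h => absurd h hk⟩
  choose col hcol using hcol
  have hcov := covNum_le_of_coloring { x : PIdx d → Fin n → ℝ | ∀ k, ∑ j, x k j ^ 2 ≤ 1 }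
    (fun x y => hatAlpha A T (x - y)) ((2 : ℝ)⁻¹ ^ l * S)
    (fun x (k : ι) => col k (x k.1)) (by
      intro x hx y hy hxy
      have h1 : hatAlpha A T (x - y) ≤ ∑ j : PIdx d, ∑ _PP : Finset (Finset (Fin (d + 1))) ×
          Finset (Finset (Fin (d + 1))), δ := by
        refine Finset.sum_le_sum fun j _ => ?_
        refine le_trans (Finset.sum_le_sum fun PP hPP => ?_)
          (Finset.sum_le_sum_of_subset_of_nonneg (Finset.filter_subset _ _)
            fun _ _ _ => hδ0)
        exact hcol (j, PP) (Finset.mem_filter.1 hPP).2 (x j) (y j) (hx j) (hy j)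
          (congrFun hxy (j, PP))
      refine h1.trans (le_of_eq ?_)
      rw [← Fintype.sum_prod_type' (fun _ _ => δ), Finset.sum_const, nsmul_eq_mul,
        Finset.card_univ]
      change q * δ = _
      rw [hδ]
      field_simp)
  refine hcov.trans ?_
  rw [Fintype.card_fun, Fintype.card_fin, Nat.cast_pow]
  have hMle : (M : ℝ) ≤ Real.exp (1 + t ^ 2 / 2) := by
    refine (Nat.floor_le (by positivity)).trans ?_
    rw [Real.exp_add]
    refine mul_le_mul_of_nonneg_right ?_ (Real.exp_nonneg _)
    linarith [Real.add_one_le_exp (1 : ℝ)]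
  calc (M : ℝ) ^ Fintype.card ι ≤ Real.exp (1 + t ^ 2 / 2) ^ Fintype.card ι :=
        pow_le_pow_left₀ (by positivity) hMle _
    _ = Real.exp (q * (1 + t ^ 2 / 2)) := by rw [← Real.exp_nat_mul]
    _ ≤ _ := by
      refine Real.exp_le_exp.2 ?_
      have ht2 : t ^ 2 = K ^ 2 * (2 ^ (2 * l) * p) := by
        rw [ht, hε, div_inv_eq_mul, mul_pow, mul_pow, Real.sq_sqrt hp0.le, pow_mul', mul_assoc]
      have h1 : 1 ≤ (2 : ℝ) ^ (2 * l) * p :=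
        one_le_mul_of_one_le_of_one_le (one_le_pow₀ (by norm_num)) hp
      rw [ht2, mul_assoc, mul_assoc]
      refine mul_le_mul_of_nonneg_left ?_ hq0.le
      nlinarith
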